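/- arXiv:2007.02740 — 5 statements merged into one kernel-verified Lean document; each statement's English description precedes it below -/
import Mathlib

section
/- Let f : {0,1}^m → {0,1} be a non-constant monotone function, S ⊆ {0,1}^ℓ × 𝒪 a search problem, gd a gadget with Λ = {0,1}^t, Π a protocol solving mKW_f ⊛ (S◇gd), and π₁ a live transcript of Π. Then there exist p ∈ ℕ and a set of matrices 𝒲₀ ⊆ Λ^{m×ℓ} with |𝒲₀| ≥ 2^{−p}·|Λ|^{m·ℓ}, such that for every W ∈ 𝒲₀ it holds that mL(𝒜_{π₁,W} × ℬ_{π₁,W}) > 2^p · m. -/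
open Classical

noncomputable section

/-! ### Deterministic communication protocols -/

/-- A deterministic communication protocol: a finite binary protocol tree whose
leaves are labeled by outputs in `O`.  At a `nodeA` vertex Alice sends a bit
(computed from her input), at a `nodeB` vertex Bob sends a bit. -/
inductive Protocol (X Y O : Type) : Type where
  | leaf : O → Protocol X Y O
  | nodeA : (X → Bool) → Protocol X Y O → Protocol X Y O → Protocol X Y O
  | nodeB : (Y → Bool) → Protocol X Y O → Protocol X Y O → Protocol X Y O

namespace Protocol

variable {X Y O : Type}

/-- The output of the protocol on an input pair. -/
def run : Protocol X Y O → X → Y → O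
  | leaf o, _, _ => o
  | nodeA h p0 p1, x, y => if h x then run p1 x y else run p0 x y
  | nodeB h p0 p1, x, y => if h y then run p1 x y else run p0 x y

/-- Depth (communication complexity) of a protocol tree. -/
def depth : Protocol X Y O → ℕ
  | leaf _ => 0
  | nodeA _ p0 p1 => max (depth p0) (depth p1) + 1
  | nodeB _ p0 p1 => max (depth p0) (depth p1) + 1

/-- Number of leaves (protocol size). -/
def leaves : Protocol X Y O → ℕ
  | leaf _ => 1
  | nodeA _ p0 p1 => leaves p0 + leaves p1
  | nodeB _ p0 p1 => leaves p0 + leaves p1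

/-- `followsA p π x` : Alice's input `x` is consistent with the partial transcript `π`,
i.e. `x` belongs to the Alice-side `𝒳_π` of the rectangle associated with the vertex `π`. -/
def followsA : Protocol X Y O → List Bool → X → Prop
  | _, [], _ => True
  | leaf _, _ :: _, _ => False
  | nodeA h p0 p1, b :: rest, x =>
      h x = b ∧ (if b then followsA p1 rest x else followsA p0 rest x)
  | nodeB _ p0 p1, b :: rest, x =>
      if b then followsA p1 rest x else followsA p0 rest x

/-- `followsB p π y` : Bob's input `y` is consistent with the partial transcript `π`,
i.e. `y` belongs to the Bob-side `𝒴_π` of the rectangle associated with the vertex `π`. -/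
def followsB : Protocol X Y O → List Bool → Y → Prop
  | _, [], _ => True
  | leaf _, _ :: _, _ => False
  | nodeA _ p0 p1, b :: rest, y =>
      if b then followsB p1 rest y else followsB p0 rest y
  | nodeB h p0 p1, b :: rest, y =>
      h y = b ∧ (if b then followsB p1 rest y else followsB p0 rest y)

/-- The subtree of the protocol reached by following a partial transcript. -/
def subtree : Protocol X Y O → List Bool → Option (Protocol X Y O)
  | p, [] => some p
  | leaf _, _ :: _ => none
  | nodeA _ p0 p1, b :: rest => if b then subtree p1 rest else subtree p0 rest
  | nodeB _ p0 p1, b :: rest => if b then subtree p1 rest else subtree p0 rest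

/-- `π` is a (partial or full) transcript of the protocol, i.e. a vertex of the protocol tree. -/
def IsTranscript (p : Protocol X Y O) (π : List Bool) : Prop :=
  (subtree p π).isSome = true

/-- `π` is a full transcript of the protocol, i.e. a root-to-leaf path. -/
def IsFullTranscript (p : Protocol X Y O) (π : List Bool) : Prop :=
  ∃ o : O, subtree p π = some (leaf o)

end Protocol

/-- A protocol solves a communication problem `S` if on every input pair it
outputs a valid output. -/
def Solves {X Y O : Type} (p : Protocol X Y O) (S : X → Y → O → Prop) : Prop :=
  ∀ x y, S x y (p.run x y)

/-- `L(S)`: minimal number of leaves of a protocol solving `S`. -/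
def Lsize {X Y O : Type} (S : X → Y → O → Prop) : ℕ :=
  sInf {k | ∃ p : Protocol X Y O, Solves p S ∧ p.leaves = k}

/-- `CC(S)`: the deterministic communication complexity (minimal depth) of `S`. -/
def CC {X Y O : Type} (S : X → Y → O → Prop) : ℕ :=
  sInf {k | ∃ p : Protocol X Y O, Solves p S ∧ p.depth = k}

/-! ### Decision trees and query complexity -/

inductive DTree (ι O : Type) : Type where
  | leaf : O → DTree ι O
  | node : ι → DTree ι O → DTree ι O → DTree ι O

namespace DTree

variable {ι O : Type}

def run : DTree ι O → (ι → Bool) → O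
  | leaf o, _ => o
  | node i t0 t1, z => if z i then run t1 z else run t0 z

def depth : DTree ι O → ℕ
  | leaf _ => 0
  | node _ t0 t1 => max (depth t0) (depth t1) + 1

end DTree

def DSolves {ι O : Type} (T : DTree ι O) (S : (ι → Bool) → O → Prop) : Prop :=
  ∀ z, S z (T.run z)

/-- `Q(S)`: the deterministic query complexity of the search problem `S`. -/
def Qcomplexity {ι O : Type} (S : (ι → Bool) → O → Prop) : ℕ :=
  sInf {k | ∃ T : DTree ι O, DSolves T S ∧ T.depth = k}

/-! ### Monotone Karchmer–Wigderson relations -/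

/-- The monotone KW relation of a rectangle `A × B`: find `i` with `x i > y i`. -/
def mKWrect {ι : Type} (A B : Set (ι → Bool)) : ↥A → ↥B → ι → Prop :=
  fun x y i => x.val i = true ∧ y.val i = false

/-- `mL(A × B)`: the monotone formula complexity of the rectangle `A × B`. -/
def mL {ι : Type} (A B : Set (ι → Bool)) : ℕ := Lsize (mKWrect A B)

/-- The monotone KW relation of a monotone function `f`. -/
def mKW {ι : Type} (f : (ι → Bool) → Bool) :
    {x : ι → Bool // f x = true} → {y : ι → Bool // f y = false} → ι → Prop :=
  fun x y i => x.val i = true ∧ y.val i = false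

/-! ### Lifted search problems, discrepancy, reductions -/

/-- The lifted search problem `S ◇ gd`. -/
def liftSP {ι Λ O : Type} (S : (ι → Bool) → O → Prop) (gd : Λ → Λ → Bool) :
    (ι → Λ) → (ι → Λ) → O → Prop :=
  fun x y o => S (fun i => gd (x i) (y i)) o

/-- The discrepancy of a gadget `gd : {0,1}^t × {0,1}^t → {0,1}`. -/
def disc {t : ℕ} (gd : (Fin t → Bool) → (Fin t → Bool) → Bool) : ℝ :=
  sSup {r : ℝ | ∃ A B : Finset (Fin t → Bool),
    r = |((((A ×ˢ B).filter fun uv => gd uv.1 uv.2 = false).card : ℝ) -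
          (((A ×ˢ B).filter fun uv => gd uv.1 uv.2 = true).card : ℝ))| /
        ((2 ^ t : ℝ) * (2 ^ t : ℝ))}

/-- A (rectangular) reduction between communication problems. -/
def Reduces {X Y O X' Y' O' : Type}
    (S : X → Y → O → Prop) (S' : X' → Y' → O' → Prop) : Prop :=
  ∃ (RA : X → X') (RB : Y → Y') (Rout : O' → O),
    ∀ x y o', S' (RA x) (RB y) o' → S x y (Rout o')

/-- An injective reduction between communication problems. -/
def ReducesInj {X Y O X' Y' O' : Type}
    (S : X → Y → O → Prop) (S' : X' → Y' → O' → Prop) : Prop :=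
  ∃ (RA : X → X') (RB : Y → Y') (Rout : O' → O),
    Function.Injective RA ∧ Function.Injective RB ∧
    ∀ x y o', S' (RA x) (RB y) o' → S x y (Rout o')

/-! ### Compositions -/

/-- `mKW_f ◇ mKW_g := mKW_{f ◇ g}` : Alice gets `X ∈ (f◇g)⁻¹(1)`, Bob gets
`Y ∈ (f◇g)⁻¹(0)`, and they must find an entry `(i,j)` with `X i j > Y i j`. -/
def diamondKW {m : ℕ} {ι : Type} (f : (Fin m → Bool) → Bool) (g : (ι → Bool) → Bool) :
    {X : Fin m → ι → Bool // f (fun i => g (X i)) = true} →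
    {Y : Fin m → ι → Bool // f (fun i => g (Y i)) = false} →
    (Fin m × ι) → Prop :=
  fun X Y e => X.val e.1 e.2 = true ∧ Y.val e.1 e.2 = false

/-- `mKW_f ⊛ mKW_g` : same inputs as `mKW_f ◇ mKW_g`, but valid outputs are entries
`(i,j)` with `a_i > b_i` and `X i j > Y i j`, where `a_i = g(X_i)`, `b_i = g(Y_i)`. -/
def starKW {m : ℕ} {ι : Type} (f : (Fin m → Bool) → Bool) (g : (ι → Bool) → Bool) :
    {X : Fin m → ι → Bool // f (fun i => g (X i)) = true} →
    {Y : Fin m → ι → Bool // f (fun i => g (Y i)) = false} →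
    (Fin m × ι) → Prop :=
  fun X Y e => g (X.val e.1) = true ∧ g (Y.val e.1) = false ∧
    X.val e.1 e.2 = true ∧ Y.val e.1 e.2 = false

/-- `mKW_f ⊛ (S ◇ gd)` : Alice gets `X ∈ Λ^{m×ℓ}` and `a ∈ f⁻¹(1)`, Bob gets
`Y ∈ Λ^{m×ℓ}` and `b ∈ f⁻¹(0)`; valid outputs are pairs `(i,o)` with `a_i > b_i`
and `o` a valid output of `S ◇ gd` on the rows `(X_i, Y_i)`. -/
def starLift {m ℓ : ℕ} {Λ O : Type} (f : (Fin m → Bool) → Bool)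
    (S : (Fin ℓ → Bool) → O → Prop) (gd : Λ → Λ → Bool) :
    ((Fin m → Fin ℓ → Λ) × {a : Fin m → Bool // f a = true}) →
    ((Fin m → Fin ℓ → Λ) × {b : Fin m → Bool // f b = false}) →
    (Fin m × O) → Prop :=
  fun Xa Yb io =>
    Xa.2.val io.1 = true ∧ Yb.2.val io.1 = false ∧
      liftSP S gd (Xa.1 io.1) (Yb.1 io.1) io.2

/-! ### Live transcripts -/

/-- `𝒜_{π,W}` : the vectors `a ∈ f⁻¹(1)` such that `(W,a)` is consistent with `π`. -/
def Aset {m ℓ : ℕ} {Λ O : Type} (f : (Fin m → Bool) → Bool)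
    (Pr : Protocol ((Fin m → Fin ℓ → Λ) × {a : Fin m → Bool // f a = true})
                   ((Fin m → Fin ℓ → Λ) × {b : Fin m → Bool // f b = false}) (Fin m × O))
    (π : List Bool) (W : Fin m → Fin ℓ → Λ) : Set (Fin m → Bool) :=
  {a | ∃ h : f a = true, Protocol.followsA Pr π (W, ⟨a, h⟩)}

/-- `ℬ_{π,W}` : the vectors `b ∈ f⁻¹(0)` such that `(W,b)` is consistent with `π`. -/
def Bset {m ℓ : ℕ} {Λ O : Type} (f : (Fin m → Bool) → Bool)
    (Pr : Protocol ((Fin m → Fin ℓ → Λ) × {a : Fin m → Bool // f a = true})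
                   ((Fin m → Fin ℓ → Λ) × {b : Fin m → Bool // f b = false}) (Fin m × O))
    (π : List Bool) (W : Fin m → Fin ℓ → Λ) : Set (Fin m → Bool) :=
  {b | ∃ h : f b = false, Protocol.followsB Pr π (W, ⟨b, h⟩)}

/-- `γ(π)` : the average over uniform `W ∈ Λ^{m×ℓ}` of `mL(𝒜_{π,W} × ℬ_{π,W})`. -/
def gammaM {m ℓ : ℕ} {Λ O : Type} [Fintype Λ] [DecidableEq Λ] (f : (Fin m → Bool) → Bool)
    (Pr : Protocol ((Fin m → Fin ℓ → Λ) × {a : Fin m → Bool // f a = true})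
                   ((Fin m → Fin ℓ → Λ) × {b : Fin m → Bool // f b = false}) (Fin m × O))
    (π : List Bool) : ℝ :=
  (∑ W : Fin m → Fin ℓ → Λ, (mL (Aset f Pr π W) (Bset f Pr π W) : ℝ)) /
    (Fintype.card (Fin m → Fin ℓ → Λ) : ℝ)

/-- A transcript is live (alive) if it is a vertex of the protocol tree and `γ(π) ≥ 4m²`. -/
def LiveT {m ℓ : ℕ} {Λ O : Type} [Fintype Λ] [DecidableEq Λ] (f : (Fin m → Bool) → Bool)
    (Pr : Protocol ((Fin m → Fin ℓ → Λ) × {a : Fin m → Bool // f a = true})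
                   ((Fin m → Fin ℓ → Λ) × {b : Fin m → Bool // f b = false}) (Fin m × O))
    (π : List Bool) : Prop :=
  Protocol.IsTranscript Pr π ∧ 4 * (m : ℝ) ^ 2 ≤ gammaM f Pr π

/-! ### Average degree -/

/-- Projection of a set of strings to the coordinates in `J`. -/
def projSet {N Λ : Type} (W : Set (N → Λ)) (J : Set N) : Set (↥J → Λ) :=
  (fun w (j : ↥J) => w j.val) '' W

/-- Relative average degree: `rAvgDeg_I(W) = (|W| / |W|_{N−I}|) / |Λ|^{|I|}`. -/
def rAvgDeg {N Λ : Type} [Fintype Λ] (W : Set (N → Λ)) (I : Set N) : ℝ :=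
  ((W.ncard : ℝ) / ((projSet W Iᶜ).ncard : ℝ)) / ((Fintype.card Λ : ℝ) ^ I.ncard)

/-- View a set of `m × ℓ` matrices as a set of strings indexed by `Fin m × Fin ℓ`. -/
def matSet {m ℓ : ℕ} {Λ : Type} (WW : Set (Fin m → Fin ℓ → Λ)) : Set (Fin m × Fin ℓ → Λ) :=
  (fun W p => W p.1 p.2) '' WW

/-! ### Hard collections -/

/-- A transcript `π` supports the collection `(𝒲, a^W, b^W)` if for every `W ∈ 𝒲`,
`(W, a^W) ∈ 𝒳_π` and `(W, b^W) ∈ 𝒴_π`. -/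
def SupportsCollection {m ℓ : ℕ} {Λ O : Type} (f : (Fin m → Bool) → Bool)
    (Pr : Protocol ((Fin m → Fin ℓ → Λ) × {a : Fin m → Bool // f a = true})
                   ((Fin m → Fin ℓ → Λ) × {b : Fin m → Bool // f b = false}) (Fin m × O))
    (π : List Bool) (WW : Set (Fin m → Fin ℓ → Λ))
    (aW bW : (Fin m → Fin ℓ → Λ) → (Fin m → Bool)) : Prop :=
  ∀ W ∈ WW, aW W ∈ Aset f Pr π W ∧ bW W ∈ Bset f Pr π W

/-- The collection `(𝒲, a^W, b^W)` is hard: there is a set `R` of revealed rows such that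
(i) every set `I` of unrevealed rows has relative average degree at least `4^{-|I|}` in the
restriction of `𝒲` to the unrevealed rows, and (ii) `a^W|_R ≤ b^{W'}|_R` for all `W, W' ∈ 𝒲`. -/
def HardCollection {m ℓ : ℕ} {Λ : Type} [Fintype Λ] (f : (Fin m → Bool) → Bool)
    (WW : Set (Fin m → Fin ℓ → Λ))
    (aW bW : (Fin m → Fin ℓ → Λ) → (Fin m → Bool)) : Prop :=
  ∃ R : Set (Fin m),
    (∀ I : Set (Fin m), I ⊆ Rᶜ →
      ((1 : ℝ) / 4) ^ I.ncard ≤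
        rAvgDeg (projSet (matSet WW) {p : Fin m × Fin ℓ | p.1 ∉ R})
          {q : ↥{p : Fin m × Fin ℓ | p.1 ∉ R} | q.val.1 ∈ I}) ∧
    (∀ W ∈ WW, ∀ W' ∈ WW, ∀ i ∈ R, aW W i ≤ bW W' i)

/-! ### CNF formulas, Nullstellensatz degree -/

/-- A clause over `ℓ` variables: a set of literals; `(i, true)` is the positive
literal `x_i`, `(i, false)` is the negative literal `¬x_i`. -/
abbrev CnfClause (ℓ : ℕ) := Finset (Fin ℓ × Bool)

/-- An assignment satisfies a clause if some literal is satisfied. -/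
def clauseSat {ℓ : ℕ} (z : Fin ℓ → Bool) (C : CnfClause ℓ) : Prop :=
  ∃ lit ∈ C, z lit.1 = lit.2

/-- The search problem `S_φ` : given an assignment, find a violated clause of `φ`. -/
def searchCNF {ℓ : ℕ} (φ : Finset (CnfClause ℓ)) :
    (Fin ℓ → Bool) → CnfClause ℓ → Prop :=
  fun z C => C ∈ φ ∧ ¬ clauseSat z C

/-- The standard polynomial encoding of a clause. -/
def clausePoly {ℓ : ℕ} (C : CnfClause ℓ) : MvPolynomial (Fin ℓ) (ZMod 2) :=
  ∏ lit ∈ C, (if lit.2 then 1 - MvPolynomial.X lit.1 else MvPolynomial.X lit.1)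

/-- The Nullstellensatz degree of a CNF contradiction `φ` over `F₂`. -/
def NSdeg {ℓ : ℕ} (φ : Finset (CnfClause ℓ)) : ℕ :=
  sInf {d : ℕ | ∃ (q : CnfClause ℓ → MvPolynomial (Fin ℓ) (ZMod 2))
      (r : Fin ℓ → MvPolynomial (Fin ℓ) (ZMod 2)),
      ((∑ C ∈ φ, clausePoly C * q C) +
        ∑ i : Fin ℓ, (MvPolynomial.X i ^ 2 - MvPolynomial.X i) * r i) = 1 ∧
      (∀ C ∈ φ, (clausePoly C * q C).totalDegree ≤ d) ∧
      (∀ i : Fin ℓ, ((MvPolynomial.X i ^ 2 - MvPolynomial.X i) * r i).totalDegree ≤ d)}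

/-- The equality gadget. -/
def eqGadget {Λ : Type} [DecidableEq Λ] : Λ → Λ → Bool := fun u v => decide (u = v)

/-! ### Semi-monotone composition -/

/-- `U_m ◇ mKW_g` : Alice gets `X`, Bob gets `Y`; with `a_i = g(X_i)`, `b_i = g(Y_i)`,
valid outputs are entries `(i,j)` with (`a_i > b_i` and `X i j > Y i j`), or
(`a_i < b_i` and `X i j < Y i j`), or (`a_i = b_i` and `X i j ≠ Y i j`); if `a = b`
the players may output the failure symbol `⊥` (here `none`). -/
def semiU {m : ℕ} {ι : Type} (g : (ι → Bool) → Bool) :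
    (Fin m → ι → Bool) → (Fin m → ι → Bool) → Option (Fin m × ι) → Prop :=
  fun X Y o =>
    match o with
    | none => ∀ i, g (X i) = g (Y i)
    | some e =>
        (g (X e.1) = true ∧ g (Y e.1) = false ∧ X e.1 e.2 = true ∧ Y e.1 e.2 = false) ∨
        (g (X e.1) = false ∧ g (Y e.1) = true ∧ X e.1 e.2 = false ∧ Y e.1 e.2 = true) ∨
        (g (X e.1) = g (Y e.1) ∧ X e.1 e.2 ≠ Y e.1 e.2)

/-! ### Razborov rank measure over F₂ -/

/-- The maximal `F₂`-rank of the restriction of `A` to an `S`-monochromatic rectangle. -/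
def monoMaxRank {X Y O : Type} [Fintype X] [Fintype Y]
    (S : X → Y → O → Prop) (A : Matrix X Y (ZMod 2)) : ℕ :=
  sSup {r : ℕ | ∃ (U : Finset X) (V : Finset Y) (o : O),
    (∀ x ∈ U, ∀ y ∈ V, S x y o) ∧
    r = (A.submatrix (Subtype.val : {x // x ∈ U} → X)
          (Subtype.val : {y // y ∈ V} → Y)).rank}

/-- The Razborov rank measure `μ_{F₂}(S, A)`. -/
def muF2 {X Y O : Type} [Fintype X] [Fintype Y]
    (S : X → Y → O → Prop) (A : Matrix X Y (ZMod 2)) : ℝ :=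
  (A.rank : ℝ) / (monoMaxRank S A : ℝ)

/-! ### Kronecker powers, pattern matrices -/

/-- The `m`-fold Kronecker power of a square matrix `B`, with index type `Fin m → ι`. -/
def kronPow {ι R : Type} [CommMonoid R] (m : ℕ) (B : Matrix ι ι R) :
    Matrix (Fin m → ι) (Fin m → ι) R :=
  Matrix.of fun x y => ∏ i, B (x i) (y i)

/-- The pattern matrix `A_{x,y} = p(eq(x₁,y₁),…,eq(x_ℓ,y_ℓ))` of a multilinear
polynomial `p` with coefficients `phat` over `F₂`. -/
def patternMatrix {Λ : Type} [DecidableEq Λ] (ℓ : ℕ)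
    (phat : Finset (Fin ℓ) → ZMod 2) : Matrix (Fin ℓ → Λ) (Fin ℓ → Λ) (ZMod 2) :=
  Matrix.of fun x y =>
    ∑ T : Finset (Fin ℓ), phat T * ∏ i ∈ T, (if x i = y i then (1 : ZMod 2) else 0)

/-! ### s-t-connectivity -/

/-- The `s`-`t`-connectivity function: the input is the adjacency matrix of a directed
graph on `n` vertices, `s = 0`, `t = n-1`; output is whether `t` is reachable from `s`. -/
def stConn (n : ℕ) : ((Fin n × Fin n) → Bool) → Bool :=
  fun E =>
    if ∀ h : 0 < n,
        Relation.ReflTransGen (fun u v : Fin n => E (u, v) = true)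
          ⟨0, h⟩ ⟨n - 1, Nat.sub_lt h Nat.one_pos⟩
      then true else false

/-! ### The matrix M of the semi-monotone composition theorem -/

/-- The matrix `M` used in the semi-monotone composition theorem, built from a matrix
`A ∈ F₂^{𝒳×𝒴}` (with `𝒳 = range xs`, `𝒴 = range ys` identified with `Fin K` via the
left inverses `ix`, `iy`). -/
def semiM {m n K : ℕ} (g : (Fin n → Bool) → Bool) (xs ys : Fin K → (Fin n → Bool))
    (ix iy : (Fin n → Bool) → Fin K) (A : Matrix (Fin K) (Fin K) (ZMod 2)) :
    Matrix (Fin m → Fin n → Bool) (Fin m → Fin n → Bool) (ZMod 2) :=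
  Matrix.of fun X Y =>
    if (fun i => g (X i)) = (fun i => g (Y i)) then 0
    else ∏ i : Fin m,
      (if g (X i) = true ∧ g (Y i) = false then A (ix (X i)) (iy (Y i))
       else if g (X i) = false ∧ g (Y i) = true then A (ix (Y i)) (iy (X i))
       else if X i = Y i then 1 else 0)

end

theorem exists_search_protocol {m : ℕ} (A B : Set (Fin m → Bool)) (l : List (Fin m)) :
    ∀ i : Fin m, ∃ p : Protocol ↥A ↥B (Fin m), p.leaves + 1 ≤ 2 ^ (l.length + 1) ∧
      ∀ x y, (∃ j ∈ i :: l, x.val j = true ∧ y.val j = false) →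
        mKWrect A B x y (p.run x y) := by
  induction l with
  | nil =>
    intro i
    refine ⟨Protocol.leaf i, by simp [Protocol.leaves], ?_⟩
    rintro x y ⟨j, hj, h⟩
    have : j = i := by simpa using hj
    subst this
    exact h
  | cons k l ih =>
    intro i
    obtain ⟨p, hp, hs⟩ := ih k
    refine ⟨Protocol.nodeA (fun x => x.val i) p
      (Protocol.nodeB (fun y => y.val i) (Protocol.leaf i) p), ?_, ?_⟩
    · simp only [Protocol.leaves, List.length_cons] at *
      rw [pow_succ]
      omega
    · rintro x y ⟨j, hj, h⟩
      simp only [Protocol.run]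
      by_cases hx : x.val i = true
      · by_cases hy : y.val i = true
        · simp only [hx, hy, if_true]
          apply hs
          rcases List.mem_cons.1 hj with rfl | hj
          · simp_all
          · exact ⟨j, hj, h⟩
        · simp only [hx, hy, if_true]
          exact ⟨hx, by simpa using hy⟩
      · simp only [hx]
        apply hs
        rcases List.mem_cons.1 hj with rfl | hj
        · simp_all
        · exact ⟨j, hj, h⟩

theorem mL_le_two_pow {m : ℕ} (hm : 0 < m) (A B : Set (Fin m → Bool))
    (h : ∀ x ∈ A, ∀ y ∈ B, ∃ j, x j = true ∧ y j = false) : mL A B ≤ 2 ^ m := by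
  obtain ⟨n, rfl⟩ : ∃ n, m = n + 1 := ⟨m - 1, by omega⟩
  obtain ⟨p, hp, hs⟩ := exists_search_protocol A B (List.ofFn (fun i : Fin n => i.succ)) 0
  have h1 : mL A B ≤ p.leaves := by
    apply Nat.sInf_le
    refine ⟨p, fun x y => hs x y ?_, rfl⟩
    obtain ⟨j, hj⟩ := h x.1 x.2 y.1 y.2
    refine ⟨j, ?_, hj⟩
    refine Fin.cases ?_ (fun i => ?_) j
    · simp
    · simp
  rw [List.length_ofFn] at hp
  omega

theorem min_le_bucket_sum (v m k : ℕ) :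
    min v (2 ^ k * m) ≤ m + ∑ p ∈ Finset.range k, (if 2 ^ p * m < v then 2 ^ p * m else 0) := by
  induction k with
  | zero => simp
  | succ k ih =>
    rw [Finset.sum_range_succ, pow_succ]
    have : 2 ^ k * 2 * m = 2 * (2 ^ k * m) := by ring
    rw [this]
    split_ifs <;> omega

/-- For every live transcript `π₁` there exist `p ∈ ℕ` and a set of
matrices `𝒲₀ ⊆ Λ^{m×ℓ}` with `|𝒲₀| ≥ 2^{-p}·|Λ|^{m·ℓ}` such that
`mL(𝒜_{π₁,W} × ℬ_{π₁,W}) > 2^p·m` for every `W ∈ 𝒲₀`. -/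
theorem initial_set_of_matrices (m ℓ t : ℕ) (O : Type)
    (f : (Fin m → Bool) → Bool) (S : (Fin ℓ → Bool) → O → Prop)
    (gd : (Fin t → Bool) → (Fin t → Bool) → Bool)
    (hf : Monotone f) (hf1 : ∃ x, f x = true) (hf0 : ∃ x, f x = false)
    (Pr : Protocol
        ((Fin m → Fin ℓ → (Fin t → Bool)) × {a : Fin m → Bool // f a = true})
        ((Fin m → Fin ℓ → (Fin t → Bool)) × {b : Fin m → Bool // f b = false})
        (Fin m × O))
    (hPr : Solves Pr (starLift f S gd))
    (π₁ : List Bool) (hlive : LiveT f Pr π₁) :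
    ∃ (p : ℕ) (W0 : Set (Fin m → Fin ℓ → (Fin t → Bool))),
      (2 : ℝ) ^ (-(p : ℝ)) * (Fintype.card (Fin m → Fin ℓ → (Fin t → Bool)) : ℝ) ≤
        (W0.ncard : ℝ) ∧
      ∀ W ∈ W0, 2 ^ p * m < mL (Aset f Pr π₁ W) (Bset f Pr π₁ W) := by
  have hm : 0 < m := by
    rcases Nat.eq_zero_or_pos m with rfl | h
    · obtain ⟨x, hx⟩ := hf1
      obtain ⟨y, hy⟩ := hf0
      rw [Subsingleton.elim x y, hy] at hx
      cases hx
    · exact h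
  have hsep : ∀ x y, f x = true → f y = false → ∃ j, x j = true ∧ y j = false := by
    intro x y hx hy
    by_contra hcon
    have hle : x ≤ y := by
      intro j
      by_contra hj
      apply hcon
      refine ⟨j, ?_⟩
      revert hj
      cases x j <;> cases y j <;> simp
    have := hf hle
    rw [hx, hy] at this
    exact absurd this (by decide)
  set v : (Fin m → Fin ℓ → (Fin t → Bool)) → ℕ :=
    fun W => mL (Aset f Pr π₁ W) (Bset f Pr π₁ W) with hv
  have hvb : ∀ W, v W ≤ 2 ^ m * m := by
    intro W
    refine (mL_le_two_pow hm _ _ ?_).trans (Nat.le_mul_of_pos_right _ hm)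
    rintro x ⟨hx, -⟩ y ⟨hy, -⟩
    exact hsep x y hx hy
  by_contra hcon
  push Not at hcon
  set N : ℝ := (Fintype.card (Fin m → Fin ℓ → (Fin t → Bool)) : ℝ) with hN
  have hNpos : 0 < N := by
    rw [hN]
    exact_mod_cast Fintype.card_pos
  have hcard : ∀ p : ℕ,
      (2 : ℝ) ^ p * ((Finset.univ.filter (fun W => 2 ^ p * m < v W)).card : ℝ) ≤ N := by
    intro p
    by_contra hlt
    push Not at hlt
    obtain ⟨W, hW, hW2⟩ := hcon p {W | 2 ^ p * m < v W} (by
      rw [Set.ncard_eq_toFinset_card', Set.toFinset_setOf, Real.rpow_neg (by norm_num),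
        Real.rpow_natCast, inv_mul_le_iff₀ (by positivity)]
      exact hlt.le)
    exact absurd hW (not_lt.2 hW2)
  have hpt : ∀ W, (v W : ℝ) ≤
      m + ∑ p ∈ Finset.range m, (if 2 ^ p * m < v W then (2 : ℝ) ^ p * m else 0) := by
    intro W
    have := min_le_bucket_sum (v W) m m
    rw [min_eq_left (hvb W)] at this
    exact_mod_cast this
  have hsum : ∑ W, (v W : ℝ) ≤ N * m + m * (m * N) := by
    calc ∑ W, (v W : ℝ) ≤ ∑ W, ((m : ℝ) + ∑ p ∈ Finset.range m,
          (if 2 ^ p * m < v W then (2 : ℝ) ^ p * m else 0)) :=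
          Finset.sum_le_sum (fun W _ => hpt W)
      _ = N * m + ∑ p ∈ Finset.range m, ∑ W,
          (if 2 ^ p * m < v W then (2 : ℝ) ^ p * m else 0) := by
          rw [Finset.sum_add_distrib, Finset.sum_comm, Finset.sum_const, nsmul_eq_mul,
            Finset.card_univ]
      _ ≤ N * m + ∑ p ∈ Finset.range m, (m * N : ℝ) := by
          gcongr with p hp
          rw [← Finset.sum_filter, Finset.sum_const, nsmul_eq_mul]
          have := mul_le_mul_of_nonneg_left (hcard p) (Nat.cast_nonneg (α := ℝ) m)
          linarith
      _ = N * m + m * (m * N) := by simp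
  have hl := hlive.2
  unfold gammaM at hl
  rw [le_div_iff₀ hNpos] at hl
  have h4 : 4 * (m : ℝ) ^ 2 * N ≤ N * m + m * (m * N) := hl.trans hsum
  have hm1 : (1 : ℝ) ≤ m := by exact_mod_cast hm
  have h5 : 0 < (m : ℝ) * N := by positivity
  nlinarith
end

section
/- Let f : {0,1}^m → {0,1} be a non-constant monotone function, S ⊆ {0,1}^ℓ × 𝒪 a search problem, gd a gadget with Λ = {0,1}^t, Π a protocol solving mKW_f ⊛ (S◇gd), and π₁ a live transcript of Π. Then there exist a set of matrices 𝒲 ⊆ Λ^{m×ℓ}, a set of rows R ⊆ [m], and for each W ∈ 𝒲 a nonempty set 𝒜^W ⊆ 𝒜_{π₁,W}, satisfying: (1) for every I ⊆ [m]−R, rAvgDeg_{I×[ℓ]}(𝒲|_{([m]−R)×[ℓ]}) ≥ 4^{−|I|}; (2) there is a fixed string α ∈ {0,1}^R such that a|_R = α for every a ∈ 𝒜^W and every W ∈ 𝒲; (3) for every W ∈ 𝒲, mL(𝒜^W × ℬ_{π₁,W}) > m. -/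
open Classical

/-- Transport of a protocol along extension maps for the message functions. -/
def Protocol.comapP {X Y X' Y' O : Type} (u : (X' → Bool) → (X → Bool))
    (v : (Y' → Bool) → (Y → Bool)) : Protocol X' Y' O → Protocol X Y O
  | .leaf o => .leaf o
  | .nodeA h p0 p1 => .nodeA (u h) (comapP u v p0) (comapP u v p1)
  | .nodeB h p0 p1 => .nodeB (v h) (comapP u v p0) (comapP u v p1)

theorem comapP_leaves {X Y X' Y' O : Type} (u : (X' → Bool) → (X → Bool))
    (v : (Y' → Bool) → (Y → Bool)) (p : Protocol X' Y' O) :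
    (p.comapP u v).leaves = p.leaves := by
  induction p with
  | leaf o => rfl
  | nodeA h p0 p1 h0 h1 => simp [Protocol.comapP, Protocol.leaves, h0, h1]
  | nodeB h p0 p1 h0 h1 => simp [Protocol.comapP, Protocol.leaves, h0, h1]

theorem comapP_run {X Y X' Y' O : Type} (u : (X' → Bool) → (X → Bool))
    (v : (Y' → Bool) → (Y → Bool)) (p : Protocol X' Y' O) (x : X) (y : Y) (x' : X') (y' : Y')
    (hu : ∀ h, u h x = h x') (hv : ∀ h, v h y = h y') :
    (p.comapP u v).run x y = p.run x' y' := by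
  induction p with
  | leaf o => rfl
  | nodeA h p0 p1 h0 h1 => simp [Protocol.comapP, Protocol.run, h0, h1, hu]
  | nodeB h p0 p1 h0 h1 => simp [Protocol.comapP, Protocol.run, h0, h1, hv]

/-- extension of a message function from a subset -/
noncomputable def extMsg {T : Type} (A A' : Set T) (h : ↥A' → Bool) : ↥A → Bool :=
  fun x => if hx : x.val ∈ A' then h ⟨x.val, hx⟩ else false

/-- There is a protocol for the rectangle with exactly `k` leaves. -/
def HasP {ι : Type} (A B : Set (ι → Bool)) (k : ℕ) : Prop :=
  ∃ p : Protocol ↥A ↥B ι, Solves p (mKWrect A B) ∧ p.leaves = k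

theorem mL_le_of_HasP {ι : Type} {A B : Set (ι → Bool)} {k : ℕ} (h : HasP A B k) :
    mL A B ≤ k := Nat.sInf_le h

theorem HasP_mL {ι : Type} {A B : Set (ι → Bool)} {k : ℕ} (h : HasP A B k) :
    HasP A B (mL A B) :=
  Nat.sInf_mem (s := {k | ∃ p : Protocol ↥A ↥B ι, Solves p (mKWrect A B) ∧ p.leaves = k}) ⟨k, h⟩

theorem HasP_splitA {ι : Type} {A B : Set (ι → Bool)} (i : ι) {k0 k1 : ℕ}
    (h0 : HasP (A ∩ {a | a i = false}) B k0) (h1 : HasP (A ∩ {a | a i = true}) B k1) :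
    HasP A B (k0 + k1) := by
  obtain ⟨p0, s0, l0⟩ := h0
  obtain ⟨p1, s1, l1⟩ := h1
  refine ⟨.nodeA (fun x => x.val i) (p0.comapP (extMsg _ _) id) (p1.comapP (extMsg _ _) id), ?_, ?_⟩
  · intro x y
    cases hx : x.val i with
    | false =>
      have hm : x.val ∈ A ∩ {a | a i = false} := ⟨x.2, hx⟩
      have := comapP_run (extMsg A _) id p0 x y ⟨x.val, hm⟩ y
        (by intro h; simp only [extMsg, dif_pos hm]) (fun h => rfl)
      have h2 := s0 ⟨x.val, hm⟩ y
      simp only [Protocol.run, hx, this]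
      simpa [mKWrect] using h2
    | true =>
      have hm : x.val ∈ A ∩ {a | a i = true} := ⟨x.2, hx⟩
      have := comapP_run (extMsg A _) id p1 x y ⟨x.val, hm⟩ y
        (by intro h; simp only [extMsg, dif_pos hm]) (fun h => rfl)
      have h2 := s1 ⟨x.val, hm⟩ y
      simp only [Protocol.run, hx, this]
      simpa [mKWrect] using h2
  · simp [Protocol.leaves, comapP_leaves, l0, l1]

theorem HasP_splitB {ι : Type} {A B : Set (ι → Bool)} (i : ι) {k0 k1 : ℕ}
    (h0 : HasP A (B ∩ {a | a i = false}) k0) (h1 : HasP A (B ∩ {a | a i = true}) k1) :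
    HasP A B (k0 + k1) := by
  obtain ⟨p0, s0, l0⟩ := h0
  obtain ⟨p1, s1, l1⟩ := h1
  refine ⟨.nodeB (fun x => x.val i) (p0.comapP id (extMsg _ _)) (p1.comapP id (extMsg _ _)), ?_, ?_⟩
  · intro x y
    cases hy : y.val i with
    | false =>
      have hm : y.val ∈ B ∩ {a | a i = false} := ⟨y.2, hy⟩
      have := comapP_run id (extMsg B _) p0 x y x ⟨y.val, hm⟩ (fun h => rfl)
        (by intro h; simp only [extMsg, dif_pos hm])
      have h2 := s0 x ⟨y.val, hm⟩
      simp only [Protocol.run, hy, this]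
      simpa [mKWrect] using h2
    | true =>
      have hm : y.val ∈ B ∩ {a | a i = true} := ⟨y.2, hy⟩
      have := comapP_run id (extMsg B _) p1 x y x ⟨y.val, hm⟩ (fun h => rfl)
        (by intro h; simp only [extMsg, dif_pos hm])
      have h2 := s1 x ⟨y.val, hm⟩
      simp only [Protocol.run, hy, this]
      simpa [mKWrect] using h2
  · simp [Protocol.leaves, comapP_leaves, l0, l1]

theorem HasP_emptyA {ι : Type} (i0 : ι) {A B : Set (ι → Bool)} (h : A = ∅) : HasP A B 1 := by
  refine ⟨.leaf i0, ?_, rfl⟩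
  intro x
  exact absurd x.2 (by simp [h])

/-- Separated rectangles: every pair has a valid output. -/
def SepR {ι : Type} (A B : Set (ι → Bool)) : Prop :=
  ∀ a ∈ A, ∀ b ∈ B, ∃ i, a i = true ∧ b i = false

theorem HasP_base {ι : Type} (i0 : ι) {A B : Set (ι → Bool)} (hs : SepR A B)
    (hA : A.Subsingleton) (hB : B.Subsingleton) : HasP A B 1 := by
  by_cases h : A.Nonempty ∧ B.Nonempty
  · obtain ⟨⟨a, ha⟩, ⟨b, hb⟩⟩ := h
    obtain ⟨i, hi⟩ := hs a ha b hb
    refine ⟨.leaf i, ?_, rfl⟩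
    intro x y
    have hx := hA x.2 ha
    have hy := hB y.2 hb
    simp only [Protocol.run, mKWrect, hx, hy]
    exact hi
  · refine ⟨.leaf i0, ?_, rfl⟩
    intro x y
    exact absurd ⟨⟨x.1, x.2⟩, ⟨y.1, y.2⟩⟩ h

theorem HasP_upB {ι : Type} [DecidableEq ι] (i0 : ι) (J : Finset ι) : ∀ {A B : Set (ι → Bool)},
    SepR A B → A.Subsingleton →
    (∀ b ∈ B, ∀ b' ∈ B, (∀ i, i ∉ J → b i = b' i) → (∀ i, i ∉ J → b i = b' i)) →
    (∀ b ∈ B, ∀ b' ∈ B, ∀ i, i ∉ J → b i = b' i) → HasP A B (2 ^ J.card) := by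
  induction J using Finset.induction_on with
  | empty =>
    intro A B hs hA _ hB
    refine HasP_base i0 hs hA ?_
    intro b hb b' hb'
    funext i
    exact hB b hb b' hb' i (by simp)
  | insert j J hj ih =>
    intro A B hs hA _ hB
    rw [Finset.card_insert_of_notMem hj, pow_succ, mul_two]
    refine HasP_splitB j (ih ?_ hA (fun _ _ _ _ h => h) ?_) (ih ?_ hA (fun _ _ _ _ h => h) ?_)
    · exact fun a ha b hb => hs a ha b hb.1
    · intro b hb b' hb' i hi
      by_cases hij : i = j
      · subst hij; exact hb.2.trans hb'.2.symm
      · exact hB b hb.1 b' hb'.1 i (by simp [hi, hij])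
    · exact fun a ha b hb => hs a ha b hb.1
    · intro b hb b' hb' i hi
      by_cases hij : i = j
      · subst hij; exact hb.2.trans hb'.2.symm
      · exact hB b hb.1 b' hb'.1 i (by simp [hi, hij])

theorem HasP_upA {ι : Type} [DecidableEq ι] [Fintype ι] (i0 : ι) (J : Finset ι) :
    ∀ {A B : Set (ι → Bool)},
    SepR A B → (∀ b ∈ A, ∀ b' ∈ A, ∀ i, i ∉ J → b i = b' i) →
    HasP A B (2 ^ J.card * 2 ^ Fintype.card ι) := by
  induction J using Finset.induction_on with
  | empty =>
    intro A B hs hA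
    have := HasP_upB i0 Finset.univ hs (A := A) (B := B) (by
      intro b hb b' hb'
      funext i
      exact hA b hb b' hb' i (by simp)) (fun _ _ _ _ h => h) (by simp)
    simpa using this
  | insert j J hj ih =>
    intro A B hs hB
    rw [Finset.card_insert_of_notMem hj, pow_succ, mul_two, add_mul]
    refine HasP_splitA j (ih ?_ ?_) (ih ?_ ?_)
    · exact fun a ha b hb => hs a ha.1 b hb
    · intro b hb b' hb' i hi
      by_cases hij : i = j
      · subst hij; exact hb.2.trans hb'.2.symm
      · exact hB b hb.1 b' hb'.1 i (by simp [hi, hij])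
    · exact fun a ha b hb => hs a ha.1 b hb
    · intro b hb b' hb' i hi
      by_cases hij : i = j
      · subst hij; exact hb.2.trans hb'.2.symm
      · exact hB b hb.1 b' hb'.1 i (by simp [hi, hij])

theorem HasP_four {m : ℕ} (i0 : Fin m) {A B : Set (Fin m → Bool)} (hs : SepR A B) :
    HasP A B (4 ^ m) := by
  have := HasP_upA i0 Finset.univ hs (by simp)
  simp only [Finset.card_univ, Fintype.card_fin] at this
  rwa [← mul_pow] at this

theorem mL_subadd {m : ℕ} (i0 : Fin m) {A B : Set (Fin m → Bool)} (hs : SepR A B) (i : Fin m) :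
    mL A B ≤ mL (A ∩ {a | a i = false}) B + mL (A ∩ {a | a i = true}) B :=
  mL_le_of_HasP (HasP_splitA i
    (HasP_mL (HasP_four i0 (fun a ha b hb => hs a ha.1 b hb)))
    (HasP_mL (HasP_four i0 (fun a ha b hb => hs a ha.1 b hb))))

theorem harm_bound (m : ℕ) (hm : 1 ≤ m) : ((harmonic (4 ^ m) : ℚ) : ℝ) < 4 * m := by
  have h := harmonic_le_one_add_log (4 ^ m)
  have h1 : Real.log ((4 ^ m : ℕ) : ℝ) = m * (2 * Real.log 2) := by
    push_cast
    rw [Real.log_pow, show (4 : ℝ) = 2 ^ 2 by norm_num, Real.log_pow]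
    norm_num
  rw [h1] at h
  have h2 := Real.log_two_lt_d9
  have h3 : (1 : ℝ) ≤ m := by exact_mod_cast hm
  nlinarith

/-- If the average of an integer function is large, some threshold set is large. -/
theorem exists_threshold {Ω : Type} [Fintype Ω] [Nonempty Ω] (m : ℕ) (hm : 1 ≤ m) (g : Ω → ℕ)
    (hg : ∀ w, g w ≤ 4 ^ m)
    (havg : 4 * (m : ℝ) ^ 2 ≤ (∑ w, (g w : ℝ)) / (Fintype.card Ω : ℝ)) :
    ∃ s : ℕ, 1 ≤ s ∧ (m : ℝ) * Fintype.card Ω < ({w | s ≤ g w} : Set Ω).ncard * (s : ℝ) := by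
  by_contra hcon
  push Not at hcon
  have hN : (0 : ℝ) < Fintype.card Ω := by exact_mod_cast Fintype.card_pos
  have hm' : (0 : ℝ) < m := by exact_mod_cast hm
  rw [le_div_iff₀ hN] at havg
  have key : (∑ w, (g w : ℝ)) =
      ∑ s ∈ Finset.range (4 ^ m), (({w | s + 1 ≤ g w} : Set Ω).ncard : ℝ) := by
    have h1 : ∀ w, (g w : ℝ) = ∑ s ∈ Finset.range (4 ^ m), if s + 1 ≤ g w then (1 : ℝ) else 0 := by
      intro w
      rw [Finset.sum_boole]
      congr 1
      have : (Finset.range (4 ^ m)).filter (fun s => s + 1 ≤ g w) = Finset.range (g w) := by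
        ext s
        have := hg w
        simp only [Finset.mem_filter, Finset.mem_range]
        omega
      rw [this, Finset.card_range]
    rw [Finset.sum_congr rfl (fun w _ => h1 w), Finset.sum_comm]
    refine Finset.sum_congr rfl fun s _ => ?_
    rw [Finset.sum_boole, Set.ncard_eq_toFinset_card']
    congr 2
    ext w; simp
  have h2 : (∑ w, (g w : ℝ)) ≤ ∑ s ∈ Finset.range (4 ^ m),
      (m : ℝ) * Fintype.card Ω * (((s : ℝ) + 1)⁻¹) := by
    rw [key]
    refine Finset.sum_le_sum fun s _ => ?_
    have := hcon (s + 1) (by omega)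
    push_cast at this
    rw [← div_eq_mul_inv, le_div_iff₀ (by positivity)]
    exact this
  rw [← Finset.mul_sum] at h2
  have h3 : ∑ s ∈ Finset.range (4 ^ m), (((s : ℝ) + 1)⁻¹) = ((harmonic (4 ^ m) : ℚ) : ℝ) := by
    simp [harmonic]
  rw [h3] at h2
  have h4 := harm_bound m hm
  have : (m : ℝ) * Fintype.card Ω * ((harmonic (4 ^ m) : ℚ) : ℝ) <
    (m : ℝ) * Fintype.card Ω * (4 * m) := mul_lt_mul_of_pos_left h4 (by positivity)
  nlinarith

/-- Fixing the coordinates in `I` of the candidate sets. -/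
theorem reveal_rows {m : ℕ} {Ω P : Type} [Finite P] (pr : Ω → P)
    (A B : Ω → Set (Fin m → Bool)) (hs : ∀ w, SepR (A w) (B w)) (i0 : Fin m)
    (WW : Set Ω) (AA : Ω → Set (Fin m → Bool)) (hAA : ∀ w ∈ WW, AA w ⊆ A w) (I : Finset (Fin m)) :
    ∃ (WW' : Set Ω) (AA' : Ω → Set (Fin m → Bool)) (β : Fin m → Bool),
      WW' ⊆ WW ∧ (∀ w ∈ WW', AA' w ⊆ AA w) ∧ (∀ w ∈ WW', ∀ a ∈ AA' w, ∀ i ∈ I, a i = β i) ∧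
      (pr '' WW).ncard ≤ 2 ^ I.card * (pr '' WW').ncard ∧
      (∀ w ∈ WW', mL (AA w) (B w) ≤ 2 ^ I.card * mL (AA' w) (B w)) := by
  induction I using Finset.induction_on with
  | empty => exact ⟨WW, AA, fun _ => false, subset_rfl, fun _ _ => subset_rfl, by simp, by simp, by simp⟩
  | insert j I hj ih =>
    obtain ⟨W1, A1, β, h1, h2, h3, h4, h5⟩ := ih
    have main : ∀ c : Bool, ∀ V : Set Ω, V ⊆ W1 → (pr '' W1).ncard ≤ 2 * (pr '' V).ncard →
        (∀ w ∈ V, mL (A1 w) (B w) ≤ 2 * mL (A1 w ∩ {a | a j = c}) (B w)) →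
        ∃ (WW' : Set Ω) (AA' : Ω → Set (Fin m → Bool)) (β : Fin m → Bool),
      WW' ⊆ WW ∧ (∀ w ∈ WW', AA' w ⊆ AA w) ∧
      (∀ w ∈ WW', ∀ a ∈ AA' w, ∀ i ∈ insert j I, a i = β i) ∧
      (pr '' WW).ncard ≤ 2 ^ (insert j I).card * (pr '' WW').ncard ∧
      (∀ w ∈ WW', mL (AA w) (B w) ≤ 2 ^ (insert j I).card * mL (AA' w) (B w)) := by
      intro c V hV hc hm
      rw [Finset.card_insert_of_notMem hj, pow_succ]
      refine ⟨V, fun w => A1 w ∩ {a | a j = c}, Function.update β j c, hV.trans h1, ?_, ?_, ?_, ?_⟩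
      · exact fun w hw => Set.inter_subset_left.trans (h2 w (hV hw))
      · intro w hw a ha i hi
        rcases Finset.mem_insert.1 hi with rfl | hiI
        · rw [Function.update_self]; exact ha.2
        · have hij : i ≠ j := by rintro rfl; exact hj hiI
          rw [Function.update_of_ne hij]
          exact h3 w (hV hw) a ha.1 i hiI
      · calc _ ≤ _ := h4
          _ ≤ 2 ^ I.card * (2 * (pr '' V).ncard) := Nat.mul_le_mul_left _ hc
          _ = _ := by ring
      · intro w hw
        calc _ ≤ _ := h5 w (hV hw)
          _ ≤ 2 ^ I.card * (2 * _) := Nat.mul_le_mul_left _ (hm w hw)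
          _ = _ := by ring
    let V : Bool → Set Ω := fun c => {w ∈ W1 | mL (A1 w) (B w) ≤ 2 * mL (A1 w ∩ {a | a j = c}) (B w)}
    have hU : W1 ⊆ V false ∪ V true := by
      intro w hw
      have hsub := mL_subadd i0 (A := A1 w) (B := B w)
        (fun a ha b hb => hs w a (hAA w (h1 hw) (h2 w hw ha)) b hb) j
      by_cases hh : mL (A1 w) (B w) ≤ 2 * mL (A1 w ∩ {a | a j = false}) (B w)
      · exact Or.inl ⟨hw, hh⟩
      · exact Or.inr ⟨hw, by omega⟩
    have hcard : (pr '' W1).ncard ≤ (pr '' V false).ncard + (pr '' V true).ncard := by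
      calc _ ≤ (pr '' V false ∪ pr '' V true).ncard := by
            apply Set.ncard_le_ncard _ (Set.toFinite _)
            rw [← Set.image_union]
            exact Set.image_mono hU
        _ ≤ _ := Set.ncard_union_le _ _
    by_cases hh : (pr '' W1).ncard ≤ 2 * (pr '' V false).ncard
    · exact main false (V false) (fun w hw => hw.1) hh (fun w hw => hw.2)
    · exact main true (V true) (fun w hw => hw.1) (by omega) (fun w hw => hw.2)

/-- the unrevealed entries -/
abbrev Dn (m ℓ : ℕ) (R : Set (Fin m)) : Set (Fin m × Fin ℓ) := {p | p.1 ∉ R}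

theorem Dn_ncard (m ℓ : ℕ) (R I : Set (Fin m)) (hI : I ⊆ Rᶜ) :
    (Dn m ℓ R).ncard = (Dn m ℓ (R ∪ I)).ncard +
      ({q : ↥(Dn m ℓ R) | q.val.1 ∈ I}).ncard := by
  rw [← Set.ncard_image_of_injective {q : ↥(Dn m ℓ R) | q.val.1 ∈ I} Subtype.val_injective,
    ← Set.ncard_union_eq _ (Set.toFinite _) (Set.toFinite _)]
  · congr 1
    ext p
    simp only [Set.mem_setOf_eq, Set.mem_union, Set.mem_image, Subtype.exists]
    constructor
    · intro h
      by_cases hp : p.1 ∈ I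
      · exact Or.inr ⟨p, h, hp, rfl⟩
      · exact Or.inl (by tauto)
    · rintro (h | ⟨a, h, h', rfl⟩)
      · tauto
      · exact h
  · rw [Set.disjoint_left]
    rintro p hp ⟨q, hq, rfl⟩
    exact hp (Or.inr hq)

theorem proj_proj_ncard {m ℓ : ℕ} {Λ : Type} (T : Set (Fin m × Fin ℓ → Λ)) (R I : Set (Fin m)) :
    (projSet (projSet T (Dn m ℓ R)) {q : ↥(Dn m ℓ R) | q.val.1 ∈ I}ᶜ).ncard =
      (projSet T (Dn m ℓ (R ∪ I))).ncard := by
  have e : ∀ q : ↥({q : ↥(Dn m ℓ R) | q.val.1 ∈ I}ᶜ), q.val.val ∈ Dn m ℓ (R ∪ I) := by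
    rintro ⟨⟨p, hp⟩, hq⟩ h
    rcases h with h | h
    · exact hp h
    · exact hq h
  let φ : (↥(Dn m ℓ (R ∪ I)) → Λ) → (↥({q : ↥(Dn m ℓ R) | q.val.1 ∈ I}ᶜ) → Λ) :=
    fun v q => v ⟨q.val.val, e q⟩
  have hφ : Function.Injective φ := by
    intro v w h
    funext ⟨p, hp⟩
    have hp1 : p ∈ Dn m ℓ R := fun h => hp (Or.inl h)
    have hp2 : (⟨p, hp1⟩ : ↥(Dn m ℓ R)) ∈ ({q : ↥(Dn m ℓ R) | q.val.1 ∈ I}ᶜ : Set _) :=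
      fun h => hp (Or.inr h)
    exact congrFun h ⟨⟨p, hp1⟩, hp2⟩
  rw [← Set.ncard_image_of_injective _ hφ]
  congr 1
  simp only [projSet, Set.image_image]
  rfl

theorem proj_ncard_le {N Λ : Type} [Fintype N] [Fintype Λ] (T : Set (N → Λ)) (J : Set N) :
    (projSet T J).ncard ≤ Fintype.card Λ ^ J.ncard := by
  refine (Set.ncard_le_card _).trans ?_
  rw [Nat.card_fun, Nat.card_eq_fintype_card, Nat.card_coe_set_eq]

theorem proj_mat_eq {m ℓ : ℕ} {Λ : Type} (WW : Set (Fin m → Fin ℓ → Λ)) (J : Set (Fin m × Fin ℓ)) :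
    projSet (matSet WW) J = (fun W (j : ↥J) => W j.val.1 j.val.2) '' WW := by
  simp only [projSet, matSet, Set.image_image]

/-- The invariant of the iterative procedure. -/
def InvR {m ℓ : ℕ} {Λ : Type} [Fintype Λ] (A B : (Fin m → Fin ℓ → Λ) → Set (Fin m → Bool))
    (R : Set (Fin m)) : Prop :=
  ∃ (WW : Set (Fin m → Fin ℓ → Λ)) (AA : (Fin m → Fin ℓ → Λ) → Set (Fin m → Bool))
    (α : Fin m → Bool) (τ : ℝ), 0 < τ ∧ (∀ W ∈ WW, AA W ⊆ A W) ∧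
    (∀ W ∈ WW, ∀ a ∈ AA W, ∀ i ∈ R, a i = α i) ∧
    (∀ W ∈ WW, τ ≤ (mL (AA W) (B W) : ℝ)) ∧
    (m : ℝ) * (Fintype.card Λ : ℝ) ^ (Dn m ℓ R).ncard <
      ((projSet (matSet WW) (Dn m ℓ R)).ncard : ℝ) * τ

theorem abstract_output {m ℓ : ℕ} {Λ : Type} [Fintype Λ] [Nonempty Λ]
    (A B : (Fin m → Fin ℓ → Λ) → Set (Fin m → Bool)) (hs : ∀ w, SepR (A w) (B w)) (i0 : Fin m)
    (h0 : InvR A B ∅) :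
    ∃ (WW : Set (Fin m → Fin ℓ → Λ)) (R : Set (Fin m))
      (AA : (Fin m → Fin ℓ → Λ) → Set (Fin m → Bool)) (α : Fin m → Bool),
      (∀ W ∈ WW, (AA W).Nonempty ∧ AA W ⊆ A W) ∧
      (∀ I : Set (Fin m), I ⊆ Rᶜ →
        ((1 : ℝ) / 4) ^ I.ncard ≤
          rAvgDeg (projSet (matSet WW) {p : Fin m × Fin ℓ | p.1 ∉ R})
            {q : ↥{p : Fin m × Fin ℓ | p.1 ∉ R} | q.val.1 ∈ I}) ∧
      (∀ W ∈ WW, ∀ a ∈ AA W, ∀ i ∈ R, a i = α i) ∧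
      (∀ W ∈ WW, m < mL (AA W) (B W)) := by
  obtain ⟨R, hR, hmax⟩ : ∃ R, InvR A B R ∧ ∀ R', InvR A B R' → R ⊆ R' → R' = R := by
    obtain ⟨R, hR⟩ := (Set.toFinite {R | InvR A B R}).exists_maximal ⟨∅, h0⟩
    exact ⟨R, hR.1, fun R' h' hsub => (hR.2 h' hsub).antisymm hsub⟩
  obtain ⟨WW, AA, α, τ, hτ, hsub, hfix, hlow, hden⟩ := hR
  have hLpos : (0 : ℝ) < Fintype.card Λ := by exact_mod_cast Fintype.card_pos
  have hmτ : (m : ℝ) < τ := by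
    have h1 : ((projSet (matSet WW) (Dn m ℓ R)).ncard : ℝ) ≤
        (Fintype.card Λ : ℝ) ^ (Dn m ℓ R).ncard := by
      exact_mod_cast proj_ncard_le (matSet WW) (Dn m ℓ R)
    have h2 := hden.trans_le (mul_le_mul_of_nonneg_right h1 hτ.le)
    rw [mul_comm] at h2
    exact lt_of_mul_lt_mul_left h2 (by positivity)
  have hmm : ∀ W ∈ WW, m < mL (AA W) (B W) := by
    intro W hW
    exact_mod_cast hmτ.trans_le (hlow W hW)
  refine ⟨WW, R, AA, α, ?_, ?_, hfix, hmm⟩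
  · intro W hW
    refine ⟨?_, hsub W hW⟩
    by_contra hne
    have h1 := mL_le_of_HasP (HasP_emptyA i0 (B := B W) (Set.not_nonempty_iff_eq_empty.1 hne))
    have h2 := hmm W hW
    have := i0.pos
    omega
  · intro I hI
    by_contra hcon
    push Not at hcon
    rw [rAvgDeg] at hcon
    have hPle := Set.ncard_image_le (Set.toFinite (projSet (matSet WW) (Dn m ℓ R)))
      (f := fun w (j : ↥({q : ↥(Dn m ℓ R) | q.val.1 ∈ I}ᶜ)) => w j.val)
    change (projSet (projSet (matSet WW) (Dn m ℓ R)) _).ncard ≤ _ at hPle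
    rw [proj_proj_ncard] at hcon hPle
    have hc := Dn_ncard m ℓ R I hI
    set c := ({q : ↥(Dn m ℓ R) | q.val.1 ∈ I}).ncard with hcdef
    set P := projSet (matSet WW) (Dn m ℓ R) with hP
    set Q := projSet (matSet WW) (Dn m ℓ (R ∪ I)) with hQ
    have hPpos : (0 : ℝ) < P.ncard := by
      by_contra h
      have : ((P.ncard : ℝ)) * τ ≤ 0 := mul_nonpos_of_nonpos_of_nonneg (not_lt.1 h) hτ.le
      have h3 : (0 : ℝ) ≤ (m : ℝ) * (Fintype.card Λ : ℝ) ^ (Dn m ℓ R).ncard := by positivity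
      linarith
    have hWne : WW.Nonempty := by
      by_contra h
      rw [Set.not_nonempty_iff_eq_empty] at h
      simp [hP, h, projSet, matSet] at hPpos
    have hQpos : (0 : ℝ) < Q.ncard := by
      have : 0 < Q.ncard := by
        rw [Set.ncard_pos (Set.toFinite _)]
        exact (hWne.image _).image _
      exact_mod_cast this
    have hkey : (P.ncard : ℝ) * 4 ^ I.ncard < Q.ncard * (Fintype.card Λ : ℝ) ^ c := by
      rw [div_div, div_lt_iff₀ (by positivity), one_div, inv_pow, inv_mul_eq_div,
        lt_div_iff₀ (by positivity)] at hcon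
      exact hcon
    have hIne : I.Nonempty := by
      by_contra h
      rw [Set.not_nonempty_iff_eq_empty] at h
      have hc0 : c = 0 := by simp [hcdef, h]
      have : (Q.ncard : ℝ) ≤ P.ncard := by exact_mod_cast hPle
      have hI0 : I.ncard = 0 := by simp [h]
      rw [hc0, hI0] at hkey
      simp only [pow_zero, mul_one] at hkey
      linarith
    obtain ⟨WW', AA', β, g1, g2, g3, g4, g5⟩ := reveal_rows
      (fun (W : Fin m → Fin ℓ → Λ) (j : ↥(Dn m ℓ (R ∪ I))) => W j.val.1 j.val.2)
      A B hs i0 WW AA hsub I.toFinset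
    rw [← proj_mat_eq, ← proj_mat_eq, ← Set.ncard_eq_toFinset_card'] at g4
    rw [← Set.ncard_eq_toFinset_card'] at g5
    have hinv : InvR A B (R ∪ I) := by
      refine ⟨WW', AA', fun i => if i ∈ I then β i else α i, τ / 2 ^ I.ncard, by positivity,
        fun W hW => (g2 W hW).trans (hsub W (g1 hW)), ?_, ?_, ?_⟩
      · intro W hW a ha i hi
        by_cases hiI : i ∈ I
        · simp only [hiI, if_true]
          exact g3 W hW a ha i (by simpa using hiI)
        · simp only [hiI, if_false]
          exact hfix W (g1 hW) a (g2 W hW ha) i (hi.resolve_right hiI)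
      · intro W hW
        rw [div_le_iff₀ (by positivity), mul_comm]
        refine (hlow W (g1 hW)).trans ?_
        exact_mod_cast g5 W hW
      · have g4' : (Q.ncard : ℝ) ≤ 2 ^ I.ncard *
            ((projSet (matSet WW') (Dn m ℓ (R ∪ I))).ncard : ℝ) := by exact_mod_cast g4
        set q' := ((projSet (matSet WW') (Dn m ℓ (R ∪ I))).ncard : ℝ)
        have hL : (0 : ℝ) < (Fintype.card Λ : ℝ) ^ c := by positivity
        rw [hc, pow_add] at hden
        rw [← mul_div_assoc, lt_div_iff₀ (by positivity)]
        have h4 : (4 : ℝ) ^ I.ncard = 2 ^ I.ncard * 2 ^ I.ncard := by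
          rw [← mul_pow]; norm_num
        rw [h4] at hkey
        set k : ℝ := 2 ^ I.ncard
        have hk : 0 < k := by positivity
        set x := (Fintype.card Λ : ℝ) ^ (Dn m ℓ (R ∪ I)).ncard
        set y := (Fintype.card Λ : ℝ) ^ c
        have e1 : (P.ncard : ℝ) * (k * k) < k * q' * y :=
          hkey.trans_le (mul_le_mul_of_nonneg_right g4' hL.le)
        have e2 : (P.ncard : ℝ) * k < q' * y := by
          refine lt_of_mul_lt_mul_left (a := k) ?_ hk.le
          linarith
        have e3 : (P.ncard : ℝ) * k * τ < q' * y * τ := mul_lt_mul_of_pos_right e2 hτ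
        have e4 := mul_lt_mul_of_pos_right hden hk
        refine lt_of_mul_lt_mul_right (a := y) ?_ hL.le
        linarith
    have := hmax _ hinv Set.subset_union_left
    obtain ⟨i, hi⟩ := hIne
    exact hI hi (this ▸ Or.inr hi)

/-- For every live transcript `π₁` there exist a set of matrices
`𝒲`, a set of revealed rows `R`, and nonempty candidate sets `𝒜^W ⊆ 𝒜_{π₁,W}`,
such that (1) the unrevealed rows of `𝒲` have large relative average degree,
(2) all candidate vectors agree with a fixed string `α` on `R`, and
(3) `mL(𝒜^W × ℬ_{π₁,W}) > m` for every `W ∈ 𝒲`. -/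
theorem iterative_procedure_output (m ℓ t : ℕ) (O : Type)
    (f : (Fin m → Bool) → Bool) (S : (Fin ℓ → Bool) → O → Prop)
    (gd : (Fin t → Bool) → (Fin t → Bool) → Bool)
    (hf : Monotone f) (hf1 : ∃ x, f x = true) (hf0 : ∃ x, f x = false)
    (Pr : Protocol
        ((Fin m → Fin ℓ → (Fin t → Bool)) × {a : Fin m → Bool // f a = true})
        ((Fin m → Fin ℓ → (Fin t → Bool)) × {b : Fin m → Bool // f b = false})
        (Fin m × O))
    (hPr : Solves Pr (starLift f S gd))
    (π₁ : List Bool) (hlive : LiveT f Pr π₁) :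
    ∃ (WW : Set (Fin m → Fin ℓ → (Fin t → Bool))) (R : Set (Fin m))
      (AA : (Fin m → Fin ℓ → (Fin t → Bool)) → Set (Fin m → Bool))
      (α : Fin m → Bool),
      (∀ W ∈ WW, (AA W).Nonempty ∧ AA W ⊆ Aset f Pr π₁ W) ∧
      (∀ I : Set (Fin m), I ⊆ Rᶜ →
        ((1 : ℝ) / 4) ^ I.ncard ≤
          rAvgDeg (projSet (matSet WW) {p : Fin m × Fin ℓ | p.1 ∉ R})
            {q : ↥{p : Fin m × Fin ℓ | p.1 ∉ R} | q.val.1 ∈ I}) ∧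
      (∀ W ∈ WW, ∀ a ∈ AA W, ∀ i ∈ R, a i = α i) ∧
      (∀ W ∈ WW, m < mL (AA W) (Bset f Pr π₁ W)) := by
  obtain ⟨x1, hx1⟩ := hf1
  obtain ⟨x0, hx0⟩ := hf0
  have hs : ∀ W, SepR (Aset f Pr π₁ W) (Bset f Pr π₁ W) := by
    rintro W a ⟨ha, _⟩ b ⟨hb, _⟩
    by_contra hcon
    push Not at hcon
    have hab : a ≤ b := by
      intro i
      cases h : a i with
      | false => exact Bool.false_le _
      | true =>
        have := hcon i h
        simp only [ne_eq, Bool.not_eq_false] at this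
        rw [this]
    have := hf hab
    rw [ha, hb] at this
    exact absurd this (by decide)
  have hm : 0 < m := by
    rcases Nat.eq_zero_or_pos m with rfl | h
    · rw [Subsingleton.elim x1 x0, hx0] at hx1
      exact absurd hx1 (by decide)
    · exact h
  have i0 : Fin m := ⟨0, hm⟩
  refine abstract_output (Aset f Pr π₁) (Bset f Pr π₁) hs i0 ?_
  obtain ⟨s, hs1, hs2⟩ := exists_threshold m hm
    (fun W => mL (Aset f Pr π₁ W) (Bset f Pr π₁ W))
    (fun W => mL_le_of_HasP (HasP_four i0 (hs W))) hlive.2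
  refine ⟨{W | s ≤ mL (Aset f Pr π₁ W) (Bset f Pr π₁ W)}, Aset f Pr π₁, fun _ => false, s,
    by exact_mod_cast hs1, fun _ _ => subset_rfl, by simp, ?_, ?_⟩
  · intro W hW
    exact_mod_cast hW
  · rw [proj_mat_eq, Set.ncard_image_of_injective]
    · have hD : (Dn m ℓ ∅).ncard = m * ℓ := by
        have : Dn m ℓ ∅ = Set.univ := by ext p; simp
        rw [this, Set.ncard_univ, Nat.card_eq_fintype_card]
        simp
      have hcard : (Fintype.card (Fin m → Fin ℓ → (Fin t → Bool)) : ℝ) =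
          (Fintype.card (Fin t → Bool) : ℝ) ^ (Dn m ℓ ∅).ncard := by
        rw [hD, Fintype.card_fun, Fintype.card_fun (α := Fin ℓ), Fintype.card_fin,
          Fintype.card_fin, ← pow_mul, mul_comm ℓ m]
        push_cast
        rfl
      rw [← hcard]
      exact hs2
    · intro V W h
      funext i j
      exact congrFun h ⟨(i, j), by simp⟩
end

section
/- Let T be a finite binary tree with vertex set V and root r, let γ : V → ℕ be a subadditive measure on T (i.e., γ(v) ≤ γ(v₀) + γ(v₁) for every internal vertex v with children v₀, v₁), and let M ⊆ V be a separating set of T (every path from the root to a leaf passes through a vertex of M). Then there exists a vertex v ∈ M such that γ(v) ≥ γ(r)/|M|. -/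
open Classical

/-! For Statement 10 we model a finite binary tree as an inductive type; vertices are
root-to-vertex paths (lists of bits). -/

inductive BTree : Type where
  | leaf : BTree
  | node : BTree → BTree → BTree

namespace BTree

/-- `v` is a vertex of the tree (a valid root-to-vertex path). -/
def isVertex : BTree → List Bool → Prop
  | _, [] => True
  | .leaf, _ :: _ => False
  | .node l r, b :: rest => if b then isVertex r rest else isVertex l rest

/-- `p` is a root-to-leaf path of the tree. -/
def isLeafPath : BTree → List Bool → Prop
  | .leaf, [] => True
  | .node _ _, [] => False
  | .leaf, _ :: _ => False
  | .node l r, b :: rest => if b then isLeafPath r rest else isLeafPath l rest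

/-- `v` is an internal vertex of the tree. -/
def isInternal : BTree → List Bool → Prop
  | .node _ _, [] => True
  | .leaf, [] => False
  | .leaf, _ :: _ => False
  | .node l r, b :: rest => if b then isInternal r rest else isInternal l rest

end BTree

theorem BTree.sep_sum_aux (T : BTree) : ∀ (γ : List Bool → ℕ) (M : Finset (List Bool)),
    (∀ v : List Bool, T.isInternal v → γ v ≤ γ (v ++ [false]) + γ (v ++ [true])) →
    (∀ p : List Bool, T.isLeafPath p → ∃ v ∈ M, v <+: p) →
    M.Nonempty ∧ γ [] ≤ ∑ v ∈ M, γ v := by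
  induction T with
  | leaf =>
    intro γ M _ hsep
    obtain ⟨v, hv, hp⟩ := hsep [] trivial
    have hv0 : v = [] := List.prefix_nil.mp hp
    subst hv0
    exact ⟨⟨_, hv⟩, Finset.single_le_sum (f := γ) (fun _ _ => Nat.zero_le _) hv⟩
  | node l r ihl ihr =>
    intro γ M hsub hsep
    by_cases h0 : [] ∈ M
    · exact ⟨⟨_, h0⟩, Finset.single_le_sum (f := γ) (fun _ _ => Nat.zero_le _) h0⟩
    have inj : ∀ b : Bool, Function.Injective (List.cons b) := fun b => List.cons_injective
    have key : ∀ b : Bool, ∀ p : List Bool, (BTree.node l r).isLeafPath (b :: p) →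
        ∃ v ∈ M.preimage (List.cons b) (inj b).injOn, v <+: p := by
      intro b p hp
      obtain ⟨v, hv, hvp⟩ := hsep (b :: p) hp
      cases v with
      | nil => exact absurd hv h0
      | cons c w =>
        rw [List.cons_prefix_cons] at hvp
        obtain ⟨rfl, hw⟩ := hvp
        exact ⟨w, by simpa using hv, hw⟩
    obtain ⟨⟨w, hw⟩, h1⟩ := ihl (fun v => γ (false :: v))
      (M.preimage (List.cons false) (inj false).injOn)
      (fun v hv => hsub (false :: v) (by simpa [BTree.isInternal] using hv))
      (fun p hp => key false p (by simpa [BTree.isLeafPath] using hp))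
    obtain ⟨-, h2⟩ := ihr (fun v => γ (true :: v))
      (M.preimage (List.cons true) (inj true).injOn)
      (fun v hv => hsub (true :: v) (by simpa [BTree.isInternal] using hv))
      (fun p hp => key true p (by simpa [BTree.isLeafPath] using hp))
    refine ⟨⟨false :: w, by simpa using hw⟩, ?_⟩
    have h3 := hsub [] trivial
    have h4 : ∑ v ∈ M.preimage (List.cons false) (inj false).injOn, γ (false :: v) +
        ∑ v ∈ M.preimage (List.cons true) (inj true).injOn, γ (true :: v) ≤ ∑ v ∈ M, γ v := by
      have e : ∀ b : Bool, ∑ v ∈ M.preimage (List.cons b) (inj b).injOn, γ (b :: v) =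
          ∑ v ∈ (M.preimage (List.cons b) (inj b).injOn).map ⟨_, inj b⟩, γ v :=
        fun b => (Finset.sum_map _ ⟨_, inj b⟩ γ).symm
      rw [e false, e true, ← Finset.sum_union]
      · apply Finset.sum_le_sum_of_subset
        intro v hv
        simp only [Finset.mem_union, Finset.mem_map, Finset.mem_preimage,
          Function.Embedding.coeFn_mk] at hv
        rcases hv with ⟨u, hu, rfl⟩ | ⟨u, hu, rfl⟩ <;> exact hu
      · rw [Finset.disjoint_left]
        intro v hv hv'
        simp only [Finset.mem_map, Function.Embedding.coeFn_mk] at hv hv'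
        obtain ⟨u, -, rfl⟩ := hv
        obtain ⟨u', -, h⟩ := hv'
        simp at h
    simp only [List.nil_append] at h3
    omega

/-- If `γ` is a subadditive measure on a finite binary tree `T`
and `M` is a separating set of `T`, then some vertex `v ∈ M` has `γ(v) ≥ γ(root)/|M|`. -/
theorem subadditive_measure_on_separating_set (T : BTree) (γ : List Bool → ℕ)
    (M : Finset (List Bool)) (hM : ∀ v ∈ M, T.isVertex v)
    (hsub : ∀ v : List Bool, T.isInternal v →
      γ v ≤ γ (v ++ [false]) + γ (v ++ [true]))
    (hsep : ∀ p : List Bool, T.isLeafPath p → ∃ v ∈ M, v <+: p) :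
    ∃ v ∈ M, (γ [] : ℝ) / (M.card : ℝ) ≤ (γ v : ℝ) := by
  obtain ⟨hne, hsum⟩ := BTree.sep_sum_aux T γ M hsub hsep
  obtain ⟨v, hv, hmax⟩ := M.exists_max_image γ hne
  refine ⟨v, hv, ?_⟩
  have hc : (0 : ℝ) < M.card := by exact_mod_cast hne.card_pos
  rw [div_le_iff₀ hc]
  have h : γ [] ≤ γ v * M.card := by
    refine hsum.trans ((Finset.sum_le_card_nsmul M γ (γ v) hmax).trans ?_)
    rw [smul_eq_mul, mul_comm]
  exact_mod_cast h
end

section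
/- Let Λ be a finite nonempty set, let U and [ℓ] be finite index sets with ℓ ≥ 1, and let 𝒲' ⊆ Λ^{U×[ℓ]} be a nonempty set of matrices. Suppose that for every set of rows I ⊆ U it holds that rAvgDeg_{I×[ℓ]}(𝒲') ≥ 4^{−|I|}. Then for every set of entries K ⊆ U×[ℓ] it holds that rAvgDeg_K(𝒲') ≥ 4^{−|K|}. -/
open Classical

/-- Removing a larger set of coordinates shrinks the projection by at most `|Λ|^{|B \ A|}`. -/
theorem ncard_projSet_le {N Λ : Type} [Finite N] [Fintype Λ] (W : Set (N → Λ)) (A B : Set N)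
    (hAB : A ⊆ B) :
    (projSet W Aᶜ).ncard * Fintype.card Λ ^ A.ncard ≤
      (projSet W Bᶜ).ncard * Fintype.card Λ ^ B.ncard := by
  have hdiff : (B \ A).ncard + A.ncard = B.ncard := Set.ncard_sdiff_add_ncard_of_subset hAB
  have huniv : (Set.univ : Set (↥(B \ A) → Λ)).ncard = Fintype.card Λ ^ (B \ A).ncard := by
    rw [Set.ncard_univ, Nat.card_fun, Nat.card_eq_fintype_card, Nat.card_coe_set_eq]
  have key : (projSet W Aᶜ).ncard ≤
      (projSet W Bᶜ ×ˢ (Set.univ : Set (↥(B \ A) → Λ))).ncard := by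
    refine Set.ncard_le_ncard_of_injOn
      (fun w => ((fun j => w ⟨j.1, fun h => j.2 (hAB h)⟩), (fun j => w ⟨j.1, j.2.2⟩))) ?_ ?_
      (Set.toFinite _)
    · rintro _ ⟨w, hw, rfl⟩
      exact ⟨⟨w, hw, rfl⟩, Set.mem_univ _⟩
    · intro w _ w' _ h
      have h1 := congrArg Prod.fst h
      have h2 := congrArg Prod.snd h
      funext ⟨j, hj⟩
      by_cases hB : j ∈ B
      · exact congrFun h2 ⟨j, hB, hj⟩
      · exact congrFun h1 ⟨j, hB⟩
  rw [Set.ncard_prod, huniv] at key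
  calc (projSet W Aᶜ).ncard * Fintype.card Λ ^ A.ncard
      ≤ ((projSet W Bᶜ).ncard * Fintype.card Λ ^ (B \ A).ncard) * Fintype.card Λ ^ A.ncard :=
        Nat.mul_le_mul_right _ key
    _ = _ := by rw [mul_assoc, ← pow_add, hdiff]

/-- If every set of rows `I ⊆ U` satisfies
`rAvgDeg_{I×[ℓ]}(𝒲') ≥ 4^{-|I|}`, then every set of entries `K ⊆ U×[ℓ]` satisfies
`rAvgDeg_K(𝒲') ≥ 4^{-|K|}`. -/
theorem rows_degree_to_entries_degree {U Λ : Type} [Fintype U] [Fintype Λ] [Nonempty Λ]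
    (ℓ : ℕ) (hℓ : 1 ≤ ℓ) (W : Set (U × Fin ℓ → Λ)) (hW : W.Nonempty)
    (hrows : ∀ I : Set U,
      ((1 : ℝ) / 4) ^ I.ncard ≤ rAvgDeg W {p : U × Fin ℓ | p.1 ∈ I}) :
    ∀ K : Set (U × Fin ℓ), ((1 : ℝ) / 4) ^ K.ncard ≤ rAvgDeg W K := by
  intro K
  have hI : (Prod.fst '' K).ncard ≤ K.ncard := Set.ncard_image_le (Set.toFinite K)
  have hsub : K ⊆ {p : U × Fin ℓ | p.1 ∈ Prod.fst '' K} := fun p hp => ⟨p, hp, rfl⟩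
  have hle := ncard_projSet_le W K _ hsub
  have hle' : ((projSet W Kᶜ).ncard : ℝ) * (Fintype.card Λ : ℝ) ^ K.ncard ≤
      ((projSet W {p : U × Fin ℓ | p.1 ∈ Prod.fst '' K}ᶜ).ncard : ℝ) *
        (Fintype.card Λ : ℝ) ^ {p : U × Fin ℓ | p.1 ∈ Prod.fst '' K}.ncard := by
    exact_mod_cast hle
  have hpos : 0 < (projSet W Kᶜ).ncard :=
    (Set.ncard_pos (Set.toFinite _)).2 (hW.image _)
  have hc : 0 < Fintype.card Λ := Fintype.card_pos
  calc ((1 : ℝ) / 4) ^ K.ncard ≤ ((1 : ℝ) / 4) ^ (Prod.fst '' K).ncard :=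
        pow_le_pow_of_le_one (by norm_num) (by norm_num) hI
    _ ≤ _ := hrows _
    _ ≤ rAvgDeg W K := by
        unfold rAvgDeg
        rw [div_div, div_div]
        exact div_le_div_of_nonneg_left (by positivity) (by positivity) hle'
end

section
/- There exists a universal constant κ > 0 such that the following holds. Let g : {0,1}^n → {0,1} be a non-constant monotone function, φ a CNF contradiction over ℓ variables, eq the equality function on t-bit strings with t ≥ 2·log₂ ℓ, and suppose S_φ ◇ eq reduces to mKW_g via an injective reduction with input maps R_A : Λ^ℓ → g^{-1}(1) and R_B : Λ^ℓ → g^{-1}(0), where Λ = {0,1}^t. Let 𝒳 = R_A(Λ^ℓ), 𝒴 = R_B(Λ^ℓ), and K = |Λ^ℓ| = 2^{t·ℓ}. Then there exists a matrix A ∈ F₂^{𝒳×𝒴} (with rows indexed by 𝒳 and columns by 𝒴 via the bijections R_A, R_B with Λ^ℓ) that is symmetric, satisfies A² = I_K, and satisfies log₂ μ_{F₂}(mKW_{𝒳×𝒴}, A) ≥ κ·NS_{F₂}(φ)·t. -/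
open Classical

/-! ### Helper lemmas -/

/-- Rank of a combination of juntas of equalities. -/
lemma rank_pattern_le {ℓ : ℕ} {Λ U V : Type} [Fintype Λ] [DecidableEq Λ] [Fintype U] [Fintype V]
    (x : U → Fin ℓ → Λ) (y : V → Fin ℓ → Λ) (SS : Finset (Finset (Fin ℓ)))
    (c : Finset (Fin ℓ) → ZMod 2) (M : Matrix U V (ZMod 2))
    (hM : ∀ u v, M u v = ∑ S ∈ SS, c S * ∏ i ∈ S, (if x u i = y v i then (1 : ZMod 2) else 0)) :
    M.rank ≤ ∑ S ∈ SS, Fintype.card Λ ^ S.card := by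
  let F : Matrix U (Σ S : {S // S ∈ SS}, ({i // i ∈ S.1} → Λ)) (ZMod 2) :=
    Matrix.of fun u p => if p.2 = (fun i => x u i.1) then c p.1.1 else 0
  let G : Matrix (Σ S : {S // S ∈ SS}, ({i // i ∈ S.1} → Λ)) V (ZMod 2) :=
    Matrix.of fun p v => if p.2 = (fun i => y v i.1) then 1 else 0
  have hFG : M = F * G := by
    ext u v
    rw [hM, Matrix.mul_apply, Fintype.sum_sigma, ← Finset.sum_coe_sort]
    refine Finset.sum_congr rfl fun S _ => ?_
    have h1 : (∏ i ∈ S.1, (if x u i = y v i then (1 : ZMod 2) else 0))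
        = if (fun i : {i // i ∈ S.1} => x u i.1) = (fun i => y v i.1) then 1 else 0 := by
      rw [Finset.prod_ite_zero]
      simp [funext_iff]
    rw [h1]
    simp [F, G, eq_comm]
  rw [hFG]
  refine (Matrix.rank_mul_le_left _ _).trans ((Matrix.rank_le_card_width _).trans ?_)
  rw [Fintype.card_sigma, ← Finset.sum_coe_sort SS]
  simp

/-- The equality junta matrix. -/
def eqMat {ℓ : ℕ} {Λ : Type} [DecidableEq Λ] (T : Finset (Fin ℓ)) :
    Matrix (Fin ℓ → Λ) (Fin ℓ → Λ) (ZMod 2) :=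
  Matrix.of fun x y => ∏ i ∈ T, (if x i = y i then (1 : ZMod 2) else 0)

lemma eqMat_mul_apply {ℓ : ℕ} {Λ : Type} [Fintype Λ] [DecidableEq Λ] (T T' : Finset (Fin ℓ))
    (x y : Fin ℓ → Λ) :
    (eqMat (Λ := Λ) T * eqMat (Λ := Λ) T' : Matrix (Fin ℓ → Λ) (Fin ℓ → Λ) (ZMod 2)) x y = ∏ i, ∑ u : Λ,
      (if i ∈ T then (if x i = u then (1 : ZMod 2) else 0) else 1) *
      (if i ∈ T' then (if u = y i then (1 : ZMod 2) else 0) else 1) := by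
  rw [Finset.prod_univ_sum, Matrix.mul_apply, Fintype.piFinset_univ]
  refine Finset.sum_congr rfl fun w _ => ?_
  rw [Finset.prod_mul_distrib]
  simp [eqMat, Finset.prod_ite_mem]

lemma eqMat_comm {ℓ : ℕ} {Λ : Type} [Fintype Λ] [DecidableEq Λ] (T T' : Finset (Fin ℓ)) :
    Commute (eqMat (Λ := Λ) T) (eqMat T') := by
  ext x y
  rw [eqMat_mul_apply, eqMat_mul_apply]
  refine Finset.prod_congr rfl fun i _ => ?_
  by_cases h : i ∈ T <;> by_cases h' : i ∈ T' <;> simp [h, h']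

lemma eqMat_sq {ℓ : ℕ} {Λ : Type} [Fintype Λ] [DecidableEq Λ] (hΛ : (Fintype.card Λ : ZMod 2) = 0)
    (T : Finset (Fin ℓ)) (hT : T ≠ Finset.univ) :
    eqMat (Λ := Λ) T * eqMat T = 0 := by
  ext x y
  rw [eqMat_mul_apply]
  obtain ⟨i, hi⟩ : ∃ i, i ∉ T := by
    by_contra hcon
    push Not at hcon
    exact hT (Finset.eq_univ_iff_forall.2 hcon)
  refine Finset.prod_eq_zero (Finset.mem_univ i) ?_
  simp [hi, hΛ]

lemma eqMat_univ {ℓ : ℕ} {Λ : Type} [DecidableEq Λ] :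
    eqMat (Λ := Λ) (Finset.univ : Finset (Fin ℓ)) = 1 := by
  ext x y
  rw [eqMat, Matrix.of_apply, Finset.prod_ite_zero, Matrix.one_apply]
  simp [funext_iff]

lemma sq_sum_of_commute {R ι : Type} [Ring R] (h2 : ∀ a : R, a + a = 0) (f : ι → R)
    (hc : ∀ i j, Commute (f i) (f j)) (s : Finset ι) :
    (∑ i ∈ s, f i) * (∑ i ∈ s, f i) = ∑ i ∈ s, f i * f i := by
  induction s using Finset.induction_on with
  | empty => simp
  | insert a s ha ih =>
    rw [Finset.sum_insert ha, Finset.sum_insert ha, add_mul, mul_add, mul_add, ih]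
    have : (∑ i ∈ s, f i) * f a = f a * ∑ i ∈ s, f i :=
      (Commute.sum_right s _ _ fun i _ => hc a i).eq.symm
    rw [this]
    have h3 := h2 (f a * ∑ i ∈ s, f i)
    calc _ = f a * f a + (f a * ∑ i ∈ s, f i + f a * ∑ i ∈ s, f i) + ∑ i ∈ s, f i * f i := by abel
      _ = _ := by rw [h3]; simp

lemma eqComb_sq {ℓ : ℕ} {Λ : Type} [Fintype Λ] [DecidableEq Λ]
    (hΛ : (Fintype.card Λ : ZMod 2) = 0)
    (c : Finset (Fin ℓ) → ZMod 2) (hc : c Finset.univ = 1) :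
    (∑ T, c T • eqMat (Λ := Λ) T) * (∑ T, c T • eqMat T) = 1 := by
  rw [sq_sum_of_commute]
  · rw [Finset.sum_eq_single Finset.univ]
    · rw [hc, one_smul, eqMat_univ, one_mul]
    · intro T _ hT
      rw [smul_mul_smul_comm, eqMat_sq hΛ T hT, smul_zero]
    · simp
  · intro a
    ext i j
    exact CharTwo.add_self_eq_zero _
  · intro i j
    exact ((eqMat_comm i j).smul_left _).smul_right _

/-- Duality: if `φ` has no refutation of degree `< d`, there is a dual functional. -/
lemma exists_dual {ℓ : ℕ} (φ : Finset (CnfClause ℓ)) (hd : 0 < NSdeg φ) :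
    ∃ D : MvPolynomial (Fin ℓ) (ZMod 2) →ₗ[ZMod 2] ZMod 2, D 1 = 1 ∧
      ∀ C ∈ φ, ∀ q, (clausePoly C * q).totalDegree < NSdeg φ → D (clausePoly C * q) = 0 := by
  set d := NSdeg φ with hdd
  let p : CnfClause ℓ → Submodule (ZMod 2) (MvPolynomial (Fin ℓ) (ZMod 2)) := fun C =>
    LinearMap.range (LinearMap.mulLeft (ZMod 2) (clausePoly C)) ⊓
      MvPolynomial.restrictTotalDegree (Fin ℓ) (ZMod 2) (d - 1)
  have hnot : (1 : MvPolynomial (Fin ℓ) (ZMod 2)) ∉ ⨆ C ∈ φ, p C := by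
    intro h
    rw [Submodule.mem_iSup_finset_iff_exists_sum] at h
    obtain ⟨μ, hμ⟩ := h
    have hex : ∀ C, ∃ q, clausePoly C * q = (μ C : MvPolynomial (Fin ℓ) (ZMod 2)) ∧
        (clausePoly C * q).totalDegree ≤ d - 1 := by
      intro C
      obtain ⟨⟨q, hq⟩, h2⟩ := (μ C).2
      refine ⟨q, by simpa using hq, ?_⟩
      rw [SetLike.mem_coe, MvPolynomial.mem_restrictTotalDegree] at h2
      have : clausePoly C * q = (μ C : MvPolynomial (Fin ℓ) (ZMod 2)) := by simpa using hq
      rw [this]; exact h2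
    choose q hq hq2 using hex
    have hle : NSdeg φ ≤ d - 1 := by
      refine Nat.sInf_le ⟨q, fun _ => 0, ?_, fun C _ => hq2 C, by simp⟩
      simp only [mul_zero, Finset.sum_const_zero, add_zero, hq]
      exact hμ
    omega
  obtain ⟨D, hD1, hD⟩ := Submodule.exists_le_ker_of_notMem hnot
  refine ⟨D, ?_, ?_⟩
  · have : ∀ a : ZMod 2, a ≠ 0 → a = 1 := by decide
    exact this _ hD1
  · intro C hC q hq
    have hmem : clausePoly C * q ∈ ⨆ C ∈ φ, p C := by
      refine Submodule.mem_iSup_of_mem C (Submodule.mem_iSup_of_mem hC ⟨⟨q, by simp⟩, ?_⟩)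
      rw [SetLike.mem_coe, MvPolynomial.mem_restrictTotalDegree]
      omega
    exact hD hmem

open MvPolynomial in
lemma totalDegree_lin_le {ℓ : ℕ} (i : Fin ℓ) :
    (1 - X i : MvPolynomial (Fin ℓ) (ZMod 2)).totalDegree ≤ 1 := by
  refine (totalDegree_sub _ _).trans ?_
  simp

open MvPolynomial in
lemma totalDegree_clausePoly_le {ℓ : ℕ} (C : CnfClause ℓ) :
    (clausePoly C).totalDegree ≤ C.card := by
  refine (totalDegree_finsetProd _ _).trans ?_
  rw [Finset.card_eq_sum_ones]
  refine Finset.sum_le_sum fun lit _ => ?_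
  split_ifs
  · exact totalDegree_lin_le _
  · simp

open MvPolynomial in
/-- If `z` falsifies the clause, the product polynomial factors through the clause. -/
lemma prod_factor {ℓ : ℕ} (C : CnfClause ℓ) (z : Fin ℓ → Bool) (hz : ¬ clauseSat z C) :
    (∏ i, (MvPolynomial.C (if z i then (1 : ZMod 2) else 0) + (1 - X i)))
      = clausePoly C * ∏ i ∈ (C.image Prod.fst)ᶜ,
          (MvPolynomial.C (if z i then (1 : ZMod 2) else 0) + (1 - X i)) := by
  have hz' : ∀ lit ∈ C, lit.2 = !(z lit.1) := by
    intro lit hl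
    by_contra hne
    exact hz ⟨lit, hl, by cases h1 : z lit.1 <;> cases h2 : lit.2 <;> simp_all⟩
  rw [← Finset.prod_mul_prod_compl (C.image Prod.fst)]
  congr 1
  rw [Finset.prod_image, clausePoly]
  · refine Finset.prod_congr rfl fun lit hl => ?_
    rw [hz' lit hl]
    cases z lit.1
    · simp
    · have : (1 + 1 : MvPolynomial (Fin ℓ) (ZMod 2)) = 0 := CharTwo.add_self_eq_zero 1
      simp only [if_true, map_one, Bool.not_true, Bool.false_eq_true, if_false]
      rw [← add_sub_assoc, this, zero_sub, CharTwo.neg_eq]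
  · intro a ha b hb hab
    have h1 := hz' a ha
    have h2 := hz' b hb
    exact Prod.ext hab (by rw [h1, h2, hab])

lemma card_image_fst {ℓ : ℕ} (C : CnfClause ℓ) (z : Fin ℓ → Bool) (hz : ¬ clauseSat z C) :
    (C.image Prod.fst).card = C.card := by
  have hz' : ∀ lit ∈ C, lit.2 = !(z lit.1) := by
    intro lit hl
    by_contra hne
    exact hz ⟨lit, hl, by cases h1 : z lit.1 <;> cases h2 : lit.2 <;> simp_all⟩
  refine Finset.card_image_of_injOn ?_
  intro a ha b hb hab
  have h1 := hz' a ha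
  have h2 := hz' b hb
  exact Prod.ext hab (by rw [h1, h2, hab])

open MvPolynomial in
/-- Expansion of the product polynomial under the functional. -/
lemma dual_prod_expand {ℓ : ℕ} (D : MvPolynomial (Fin ℓ) (ZMod 2) →ₗ[ZMod 2] ZMod 2)
    (P : MvPolynomial (Fin ℓ) (ZMod 2)) (s : Finset (Fin ℓ)) (z : Fin ℓ → ZMod 2) :
    D (P * ∏ i ∈ s, (MvPolynomial.C (z i) + (1 - X i)))
      = ∑ S ∈ s.powerset, D (P * ∏ i ∈ s \ S, (1 - X i)) * ∏ i ∈ S, z i := by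
  rw [Finset.prod_add, Finset.mul_sum, map_sum]
  refine Finset.sum_congr rfl fun S _ => ?_
  rw [← map_prod, mul_left_comm, MvPolynomial.C_mul', map_smul, smul_eq_mul, mul_comm]

/-- The numerical estimate. -/
lemma arith_bound (ℓ d : ℕ) (Q r : ℝ) (hd : 0 < d) (hr : 0 < r) (hQ : r ^ 4 * Q = 1)
    (hl : (ℓ : ℝ) ≤ Q * r ^ 2) (hr2 : r ^ 2 ≤ 1 / 2) :
    ∑ m ∈ Finset.range (ℓ + 1), (ℓ.choose m : ℝ) * (if d ≤ ℓ - m then Q ^ m else 0)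
      ≤ Q ^ ℓ * r ^ d := by
  have hQ0 : 0 < Q := by
    by_contra h
    push Not at h
    nlinarith [pow_pos hr 4]
  set s := r ^ 2 with hs
  have hs0 : 0 < s := by positivity
  have hsQ : s * s * Q = 1 := by rw [← hQ]; ring
  rw [← Finset.sum_range_reflect]
  have hterm : ∀ j ∈ Finset.range (ℓ + 1),
      ((ℓ.choose (ℓ + 1 - 1 - j) : ℝ) * (if d ≤ ℓ - (ℓ + 1 - 1 - j) then Q ^ (ℓ + 1 - 1 - j) else 0))
        ≤ if d ≤ j then Q ^ ℓ * 2 * (s / 2) ^ j else 0 := by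
    intro j hj
    have hj' : j ≤ ℓ := by simpa [Nat.lt_succ_iff] using hj
    have e1 : ℓ + 1 - 1 - j = ℓ - j := by omega
    have e2 : ℓ - (ℓ - j) = j := by omega
    rw [e1, e2, Nat.choose_symm hj']
    split_ifs with hdj
    · have hc : (ℓ.choose j : ℝ) ≤ (ℓ : ℝ) ^ j / (j.factorial : ℝ) := Nat.choose_le_pow_div j ℓ
      have hf : (2 : ℝ) ^ j ≤ 2 * (j.factorial : ℝ) := by
        have h1 : ∀ k : ℕ, 2 ^ (k + 1) ≤ 2 * (k + 1).factorial := by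
          intro k
          induction k with
          | zero => simp
          | succ k ih =>
            rw [pow_succ, Nat.factorial_succ]
            nlinarith [Nat.factorial_pos (k + 1)]
        obtain ⟨k, rfl⟩ : ∃ k, j = k + 1 := ⟨j - 1, by omega⟩
        exact_mod_cast h1 k
      have hfp : (0 : ℝ) < j.factorial := by exact_mod_cast Nat.factorial_pos j
      have hpow : (ℓ : ℝ) ^ j * Q ^ (ℓ - j) ≤ Q ^ ℓ * s ^ j := by
        calc (ℓ : ℝ) ^ j * Q ^ (ℓ - j) ≤ (Q * s) ^ j * Q ^ (ℓ - j) := by gcongr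
          _ = Q ^ (j + (ℓ - j)) * s ^ j := by rw [mul_pow, pow_add]; ring
          _ = Q ^ ℓ * s ^ j := by rw [Nat.add_sub_cancel' hj']
      calc (ℓ.choose j : ℝ) * Q ^ (ℓ - j) ≤ (ℓ : ℝ) ^ j / (j.factorial : ℝ) * Q ^ (ℓ - j) := by
            gcongr
        _ = ((ℓ : ℝ) ^ j * Q ^ (ℓ - j)) / (j.factorial : ℝ) := by ring
        _ ≤ (Q ^ ℓ * s ^ j) / (j.factorial : ℝ) := by gcongr
        _ ≤ Q ^ ℓ * 2 * (s / 2) ^ j := by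
            rw [div_pow, div_le_iff₀ hfp]
            have h2 : (0 : ℝ) < 2 ^ j := by positivity
            have : Q ^ ℓ * 2 * (s ^ j / 2 ^ j) * (j.factorial : ℝ)
                = Q ^ ℓ * s ^ j * ((2 * (j.factorial : ℝ)) / 2 ^ j) := by ring
            rw [this]
            refine le_mul_of_one_le_right (by positivity) ?_
            rwa [one_le_div h2]
    · simp
  refine (Finset.sum_le_sum hterm).trans ?_
  rw [← Finset.sum_filter]
  have hfil : (Finset.range (ℓ + 1)).filter (fun j => d ≤ j) = Finset.Ico d (ℓ + 1) := by
    ext j; simp [and_comm]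
  rw [hfil, ← Finset.mul_sum]
  have hg : ∑ j ∈ Finset.Ico d (ℓ + 1), (s / 2) ^ j ≤ (s / 2) ^ d / (1 - s / 2) :=
    geom_sum_Ico_le_of_lt_one (by positivity) (by linarith)
  have hg2 : (s / 2) ^ d / (1 - s / 2) ≤ (s / 2) ^ d * (4 / 3) := by
    rw [div_eq_mul_inv]
    gcongr
    rw [inv_le_comm₀ (by linarith) (by norm_num)]
    linarith
  have h2d : (2 : ℝ) ≤ 2 ^ d := by
    calc (2 : ℝ) = 2 ^ 1 := by norm_num
      _ ≤ 2 ^ d := pow_le_pow_right₀ (by norm_num) hd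
  have hr34 : r ≤ 3 / 4 := by nlinarith
  have hrd : r ^ d ≤ 3 / 4 := by
    calc r ^ d ≤ r ^ 1 := pow_le_pow_of_le_one hr.le (by linarith) hd
      _ ≤ 3 / 4 := by simpa using hr34
  have hsd : s ^ d = r ^ d * r ^ d := by rw [hs, ← pow_mul, ← pow_add]; congr 1; omega
  calc Q ^ ℓ * 2 * ∑ j ∈ Finset.Ico d (ℓ + 1), (s / 2) ^ j
      ≤ Q ^ ℓ * 2 * ((s / 2) ^ d * (4 / 3)) := by
        have := hg.trans hg2
        gcongr
    _ = Q ^ ℓ * (r ^ d * ((2 / 2 ^ d) * (r ^ d * (4 / 3)))) := by rw [div_pow, hsd]; ring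
    _ ≤ Q ^ ℓ * (r ^ d * (1 * 1)) := by
        have h1 : (2 : ℝ) / 2 ^ d ≤ 1 := by
          rw [div_le_one (by positivity)]; exact h2d
        have h3 : r ^ d * (4 / 3) ≤ 1 := by linarith
        gcongr
    _ = Q ^ ℓ * r ^ d := by ring

lemma arith_main (ℓ d t : ℕ) (hd : 0 < d) (ht : 0 < t)
    (hl : 2 * Real.logb 2 (ℓ : ℝ) ≤ (t : ℝ)) :
    ((∑ S ∈ (Finset.univ : Finset (Finset (Fin ℓ))).filter (fun S => d ≤ ℓ - S.card),
        (2 ^ t) ^ S.card : ℕ) : ℝ) ≤ ((2 : ℝ) ^ t) ^ ℓ * (2 : ℝ) ^ (-((t : ℝ) * d / 4)) := by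
  set r : ℝ := (2 : ℝ) ^ (-((t : ℝ) / 4)) with hr
  have hr0 : 0 < r := by positivity
  have hrd : (2 : ℝ) ^ (-((t : ℝ) * d / 4)) = r ^ d := by
    rw [hr, ← Real.rpow_mul_natCast (by norm_num)]
    congr 1; ring
  have hr2 : r ^ 2 = (2 : ℝ) ^ (-((t : ℝ) / 2)) := by
    rw [hr, ← Real.rpow_mul_natCast (by norm_num)]
    congr 1; push_cast; ring
  have hQ : ((2 : ℝ) ^ t) = (2 : ℝ) ^ (t : ℝ) := (Real.rpow_natCast 2 t).symm
  have hr4 : r ^ 4 * (2 : ℝ) ^ t = 1 := by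
    rw [hQ, hr, ← Real.rpow_mul_natCast (by norm_num), ← Real.rpow_add (by norm_num)]
    have : -((t : ℝ) / 4) * ((4 : ℕ) : ℝ) + t = 0 := by push_cast; ring
    rw [this, Real.rpow_zero]
  have hlQ : (ℓ : ℝ) ≤ (2 : ℝ) ^ t * r ^ 2 := by
    rw [hQ, hr2, ← Real.rpow_add (by norm_num)]
    rcases Nat.eq_zero_or_pos ℓ with h0 | h0
    · subst h0; simp; positivity
    · rw [← Real.logb_le_iff_le_rpow (by norm_num) (by exact_mod_cast h0)]
      linarith
  have hsum : ((∑ S ∈ (Finset.univ : Finset (Finset (Fin ℓ))).filter (fun S => d ≤ ℓ - S.card),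
        (2 ^ t) ^ S.card : ℕ) : ℝ)
      = ∑ m ∈ Finset.range (ℓ + 1), (ℓ.choose m : ℝ) * (if d ≤ ℓ - m then ((2 : ℝ) ^ t) ^ m else 0) := by
    have := Finset.sum_powerset_apply_card
      (fun m => if d ≤ ℓ - m then ((2 : ℝ) ^ t) ^ m else 0) (x := (Finset.univ : Finset (Fin ℓ)))
    rw [Finset.powerset_univ, Finset.card_univ, Fintype.card_fin] at this
    simp only [nsmul_eq_mul] at this
    rw [← this, ← Finset.sum_filter]
    push_cast
    rfl
  rw [hsum, hrd]
  rcases Nat.lt_or_ge 1 t with h1 | h1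
  · refine arith_bound ℓ d _ r hd hr0 hr4 hlQ ?_
    rw [hr2]
    calc (2 : ℝ) ^ (-((t : ℝ) / 2)) ≤ (2 : ℝ) ^ (-1 : ℝ) := by
          apply Real.rpow_le_rpow_of_exponent_le (by norm_num)
          have : (2 : ℝ) ≤ t := by exact_mod_cast h1
          linarith
      _ = 1 / 2 := by rw [Real.rpow_neg_one]; norm_num
  · have ht1 : t = 1 := by omega
    subst ht1
    have hl2 : (ℓ : ℝ) ^ 2 ≤ 2 := by
      have h4 : ((2 : ℝ) ^ 1 * r ^ 2) ^ 2 = 2 := by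
        have : ((2 : ℝ) ^ 1 * r ^ 2) ^ 2 = 2 * (r ^ 4 * 2 ^ 1) := by ring
        rw [this, hr4]; norm_num
      rw [← h4]; gcongr
    have hl1 : ℓ < 2 := by
      have : ℓ ^ 2 ≤ 2 := by exact_mod_cast hl2
      nlinarith
    have hrle : r ≤ 1 := by
      rw [hr]; apply Real.rpow_le_one_of_one_le_of_nonpos (by norm_num)
      norm_num
    interval_cases ℓ
    · have : ¬ d ≤ 0 := by omega
      simp [hd.ne']
      positivity
    · rcases Nat.lt_or_ge 1 d with h | h
      · have h0 : ¬ d ≤ 1 := by omega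
        simp [Finset.sum_range_succ, h0, hd.ne']
        positivity
      · have hd1 : d = 1 := by omega
        subst hd1
        simp [Finset.sum_range_succ]
        have hr3 : r ^ 4 ≤ r := by
          calc r ^ 4 ≤ r ^ 1 := pow_le_pow_of_le_one hr0.le hrle (by norm_num)
            _ = r := pow_one r
        linarith

lemma monoMaxRank_le {X Y O : Type} [Fintype X] [Fintype Y]
    (S : X → Y → O → Prop) (A : Matrix X Y (ZMod 2)) (B : ℕ)
    (h : ∀ (U : Finset X) (V : Finset Y) (o : O), (∀ x ∈ U, ∀ y ∈ V, S x y o) →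
      (A.submatrix (Subtype.val : {x // x ∈ U} → X) (Subtype.val : {y // y ∈ V} → Y)).rank ≤ B) :
    monoMaxRank S A ≤ B := by
  refine csSup_le' ?_
  rintro r ⟨U, V, o, hS, rfl⟩
  exact h U V o hS

lemma rank_sub_le_card {X Y : Type} [Fintype X] [Fintype Y] (A : Matrix X Y (ZMod 2))
    (U : Finset X) (V : Finset Y) :
    (A.submatrix (Subtype.val : {x // x ∈ U} → X) (Subtype.val : {y // y ∈ V} → Y)).rank
      ≤ Fintype.card Y := by
  refine (Matrix.rank_le_card_width _).trans ?_
  exact Fintype.card_subtype_le _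

lemma monoMaxRank_pos {X Y O : Type} [Fintype X] [Fintype Y]
    (S : X → Y → O → Prop) (A : Matrix X Y (ZMod 2)) (x : X) (y : Y) (o : O)
    (hS : S x y o) (hA : A x y ≠ 0) : 0 < monoMaxRank S A := by
  have hbdd : BddAbove {r : ℕ | ∃ (U : Finset X) (V : Finset Y) (o : O),
      (∀ x ∈ U, ∀ y ∈ V, S x y o) ∧
      r = (A.submatrix (Subtype.val : {x // x ∈ U} → X)
            (Subtype.val : {y // y ∈ V} → Y)).rank} := by
    refine ⟨Fintype.card Y, ?_⟩
    rintro r ⟨U, V, o, _, rfl⟩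
    exact rank_sub_le_card A U V
  have hle := le_csSup hbdd ⟨{x}, {y}, o, by simpa using hS, rfl⟩
  refine lt_of_lt_of_le ?_ hle
  rw [Nat.pos_iff_ne_zero]
  intro h0
  rw [Matrix.rank, Module.finrank_eq_zero_iff_of_free, Submodule.subsingleton_iff_eq_bot,
    LinearMap.range_eq_bot] at h0
  have h1 := congrFun (congrArg (fun L => L (Pi.single ⟨y, by simp⟩ 1)) h0) ⟨x, by simp⟩
  simp at h1
  exact hA h1

/-- Given an injective reduction from `S_φ ◇ eq` to `mKW_g` with
input maps `RA`, `RB`, there is a matrix `A ∈ F₂^{𝒳×𝒴}` (indexed by `Λ^ℓ` on both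
sides via the bijections `RA`, `RB`) that is symmetric, satisfies `A² = I`, and
satisfies `log₂ μ_{F₂}(mKW_{𝒳×𝒴}, A) ≥ κ·NS_{F₂}(φ)·t`. -/
theorem razborov_matrix_for_mKW :
    ∃ κ : ℝ, 0 < κ ∧
      ∀ (n ℓ t : ℕ) (g : (Fin n → Bool) → Bool) (φ : Finset (CnfClause ℓ))
        (RA RB : (Fin ℓ → (Fin t → Bool)) → (Fin n → Bool))
        (Rout : Fin n → CnfClause ℓ),
        Monotone g → (∃ x, g x = true) → (∃ x, g x = false) →
        (∀ z, ∃ C ∈ φ, ¬ clauseSat z C) →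
        2 * Real.logb 2 (ℓ : ℝ) ≤ (t : ℝ) →
        (∀ x, g (RA x) = true) → (∀ y, g (RB y) = false) →
        Function.Injective RA → Function.Injective RB →
        (∀ x y j, (RA x) j = true ∧ (RB y) j = false →
          liftSP (searchCNF φ) (eqGadget (Λ := Fin t → Bool)) x y (Rout j)) →
        ∃ A : Matrix (Fin ℓ → (Fin t → Bool)) (Fin ℓ → (Fin t → Bool)) (ZMod 2),
          A.IsSymm ∧ A * A = 1 ∧
          κ * (NSdeg φ : ℝ) * (t : ℝ) ≤
            Real.logb 2
              (muF2 (fun x y (j : Fin n) => (RA x) j = true ∧ (RB y) j = false) A) := by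
  refine ⟨1 / 4, by norm_num, ?_⟩
  intro n ℓ t g φ RA RB Rout hmono _ _ _hφ hlog hRA hRB _ _ hred
  have hcard : Fintype.card (Fin ℓ → (Fin t → Bool)) = (2 ^ t) ^ ℓ := by simp
  -- every pair of inputs has a valid output
  have hsep : ∀ x y, ∃ j, (RA x) j = true ∧ (RB y) j = false := by
    intro x y
    by_contra hcon
    push Not at hcon
    have hle : RA x ≤ RB y := by
      intro j
      cases h : RA x j
      · exact Bool.false_le _
      · have := hcon j h
        simp at this
        simp [this]
    have := hmono hle
    rw [hRA, hRB] at this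
    exact absurd this (by decide)
  rcases Nat.eq_zero_or_pos (NSdeg φ * t) with h0 | hpos
  · refine ⟨1, Matrix.isSymm_one, one_mul 1, ?_⟩
    have hz : (1 / 4 : ℝ) * (NSdeg φ : ℝ) * (t : ℝ) = 0 := by
      rw [mul_assoc, ← Nat.cast_mul, h0]; simp
    rw [hz]
    set m := monoMaxRank (fun x y (j : Fin n) => (RA x) j = true ∧ (RB y) j = false)
      (1 : Matrix (Fin ℓ → (Fin t → Bool)) (Fin ℓ → (Fin t → Bool)) (ZMod 2)) with hm
    have hmle : m ≤ Fintype.card (Fin ℓ → (Fin t → Bool)) :=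
      monoMaxRank_le _ _ _ fun U V o _ => rank_sub_le_card _ U V
    rw [muF2, ← hm, Matrix.rank_one]
    rcases Nat.eq_zero_or_pos m with hm0 | hm0
    · rw [hm0]; simp
    · apply Real.logb_nonneg (by norm_num)
      rw [one_le_div (by exact_mod_cast hm0)]
      exact_mod_cast hmle
  · have hd : 0 < NSdeg φ := Nat.pos_of_mul_pos_right hpos
    have ht : 0 < t := Nat.pos_of_mul_pos_left hpos
    obtain ⟨D, hD1, hD⟩ := exists_dual φ hd
    let c : Finset (Fin ℓ) → ZMod 2 := fun T =>
      D (1 * ∏ i ∈ Finset.univ \ T, (1 - MvPolynomial.X i))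
    have hA : ∀ x y : Fin ℓ → (Fin t → Bool), (∑ T, c T • eqMat T) x y
        = D (1 * ∏ i, (MvPolynomial.C (if x i = y i then (1 : ZMod 2) else 0)
            + (1 - MvPolynomial.X i))) := by
      intro x y
      rw [dual_prod_expand D 1 Finset.univ (fun i => if x i = y i then (1 : ZMod 2) else 0),
        Matrix.sum_apply, Finset.powerset_univ]
      rfl
    set A : Matrix (Fin ℓ → (Fin t → Bool)) (Fin ℓ → (Fin t → Bool)) (ZMod 2) :=
      ∑ T, c T • eqMat T with hAdef
    have hAA : A * A = 1 := by
      apply eqComb_sq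
      · have h2 : (2 : ZMod 2) = 0 := by decide
        simp [h2, ht.ne']
      · simp [c, hD1]
    refine ⟨A, ?_, hAA, ?_⟩
    · ext x y
      rw [Matrix.transpose_apply, hA, hA]
      simp only [eq_comm]
    · have hrank : A.rank = Fintype.card (Fin ℓ → (Fin t → Bool)) :=
        Matrix.rank_of_isUnit _ (IsUnit.of_mul_eq_one A hAA)
      have hne : ∃ x y, A x y ≠ 0 := by
        by_contra hcon
        push Not at hcon
        have hA0 : A = 0 := by ext x y; exact hcon x y
        rw [hA0, zero_mul] at hAA
        have := congrFun (congrFun hAA (fun _ _ => true)) (fun _ _ => true)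
        simp at this
      obtain ⟨x0, y0, hxy⟩ := hne
      obtain ⟨j0, hj0⟩ := hsep x0 y0
      set m := monoMaxRank (fun x y (j : Fin n) => (RA x) j = true ∧ (RB y) j = false) A with hm
      have hmpos : 0 < m := monoMaxRank_pos _ A x0 y0 j0 hj0 hxy
      have hmle : m ≤ ∑ S ∈ (Finset.univ : Finset (Finset (Fin ℓ))).filter
          (fun S => NSdeg φ ≤ ℓ - S.card), (2 ^ t) ^ S.card := by
        refine monoMaxRank_le _ _ _ fun U V j hUV => ?_
        rcases U.eq_empty_or_nonempty with hU | ⟨u0, hu0⟩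
        · subst hU
          refine (Matrix.rank_le_card_height _).trans ?_
          simp
        rcases V.eq_empty_or_nonempty with hV | ⟨v0, hv0⟩
        · subst hV
          refine (Matrix.rank_le_card_width _).trans ?_
          simp
        obtain ⟨hCφ, hC0⟩ := hred u0 v0 j (hUV u0 hu0 v0 hv0)
        set Cl := Rout j with hCl
        set W := (Cl.image Prod.fst)ᶜ with hW
        have hWcard : W.card = ℓ - Cl.card := by
          rw [hW, Finset.card_compl, card_image_fst Cl _ hC0, Fintype.card_fin]
        have hCle : Cl.card ≤ ℓ := by
          rw [← card_image_fst Cl _ hC0]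
          simpa using Finset.card_le_univ (Cl.image Prod.fst)
        let e : Finset (Fin ℓ) → ZMod 2 := fun S =>
          if S ⊆ W then D (clausePoly Cl * ∏ i ∈ W \ S, (1 - MvPolynomial.X i)) else 0
        have key := rank_pattern_le (fun u : {x // x ∈ U} => u.1) (fun v : {y // y ∈ V} => v.1)
          ((Finset.univ : Finset (Finset (Fin ℓ))).filter (fun S => NSdeg φ ≤ ℓ - S.card)) e
          (A.submatrix (Subtype.val : {x // x ∈ U} → _) (Subtype.val : {y // y ∈ V} → _)) ?_
        · simpa using key
        · intro u v
          obtain ⟨_, hC1⟩ := hred u.1 v.1 j (hUV u.1 u.2 v.1 v.2)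
          rw [Matrix.submatrix_apply, hA, one_mul]
          have hfac := prod_factor Cl _ hC1
          simp only [eqGadget, decide_eq_true_eq] at hfac
          rw [hfac, dual_prod_expand D (clausePoly Cl) _
            (fun i => if u.1 i = v.1 i then (1 : ZMod 2) else 0)]
          have hpw : W.powerset = Finset.univ.filter (fun S => S ⊆ W) := by
            ext S; simp
          rw [← hW, hpw, Finset.sum_filter, Finset.sum_filter]
          refine Finset.sum_congr rfl fun S _ => ?_
          by_cases hS : S ⊆ W
          · simp only [hS, if_true, e]
            split_ifs with hcS
            · rfl
            · have hzero : D (clausePoly Cl * ∏ i ∈ W \ S, (1 - MvPolynomial.X i)) = 0 := by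
                apply hD Cl hCφ
                refine lt_of_le_of_lt (MvPolynomial.totalDegree_mul _ _) ?_
                have h1 := totalDegree_clausePoly_le Cl
                have h2 : (∏ i ∈ W \ S, (1 - MvPolynomial.X i :
                    MvPolynomial (Fin ℓ) (ZMod 2))).totalDegree ≤ (W \ S).card := by
                  refine (MvPolynomial.totalDegree_finsetProd _ _).trans ?_
                  rw [Finset.card_eq_sum_ones]
                  exact Finset.sum_le_sum fun i _ => totalDegree_lin_le i
                rw [Finset.card_sdiff_of_subset hS] at h2
                have h3 := Finset.card_le_card hS
                omega
              rw [hzero, zero_mul]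
          · simp [hS, e]
      have harith := arith_main ℓ (NSdeg φ) t hd ht hlog
      have hmR : (m : ℝ) ≤ ((2 : ℝ) ^ t) ^ ℓ * (2 : ℝ) ^ (-((t : ℝ) * (NSdeg φ : ℕ) / 4)) :=
        le_trans (by exact_mod_cast hmle) harith
      have hmp : (0 : ℝ) < m := by exact_mod_cast hmpos
      rw [muF2, ← hm, hrank, hcard]
      rw [Real.le_logb_iff_rpow_le (by norm_num) (by positivity), le_div_iff₀ hmp]
      calc (2 : ℝ) ^ (1 / 4 * (NSdeg φ : ℝ) * (t : ℝ)) * m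
          ≤ (2 : ℝ) ^ (1 / 4 * (NSdeg φ : ℝ) * (t : ℝ)) *
            (((2 : ℝ) ^ t) ^ ℓ * (2 : ℝ) ^ (-((t : ℝ) * (NSdeg φ : ℕ) / 4))) := by gcongr
        _ = ((2 : ℝ) ^ t) ^ ℓ * ((2 : ℝ) ^ (1 / 4 * (NSdeg φ : ℝ) * (t : ℝ)) *
              (2 : ℝ) ^ (-((t : ℝ) * (NSdeg φ : ℕ) / 4))) := by ring
        _ = ((2 : ℝ) ^ t) ^ ℓ := by
            rw [← Real.rpow_add (by norm_num)]
            have : 1 / 4 * (NSdeg φ : ℝ) * (t : ℝ) + -((t : ℝ) * (NSdeg φ : ℕ) / 4) = 0 := by ring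
            rw [this, Real.rpow_zero, mul_one]
        _ = (((2 ^ t) ^ ℓ : ℕ) : ℝ) := by push_cast; rfl
        _ ≤ _ := le_rfl
end
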